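/- Suppose Φ : 𝔻ⁿ → 𝔻ⁿ is holomorphic and C¹-smooth on the closed polydisc, and satisfies the rank condition (†): for every nonempty subset I ⊆ {1,…,n} of cardinality q and every ζ ∈ 𝕋ⁿ with Φ_I(ζ) ∈ 𝕋^q, the complex derivative d_ζΦ_I (the q×n Jacobian matrix of the components Φ_i, i ∈ I, at ζ) has rank q. Then the composition operator C_Φ is bounded on the Hardy space H²(𝔻ⁿ). -/

import Mathlib

open MeasureTheory Metric Set ENNReal

noncomputable section

/-- The open unit polydisc in `ℂⁿ`. -/
def polydisc (n : ℕ) : Set (Fin n → ℂ) := {z | ∀ j, ‖z j‖ < 1}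

/-- The closed unit polydisc in `ℂⁿ`. -/
def closedPolydisc (n : ℕ) : Set (Fin n → ℂ) := {z | ∀ j, ‖z j‖ ≤ 1}

/-- The distinguished boundary (torus) of the polydisc. -/
def torus (n : ℕ) : Set (Fin n → ℂ) := {z | ∀ j, ‖z j‖ = 1}

/-- The `(i,j)` entry `∂Φ_i/∂z_j(ζ)` of the complex Jacobian matrix of `Φ` at `ζ`
(computed via the derivative of the extension to the closed polydisc). -/
def jacEntry (n : ℕ) (Φ : (Fin n → ℂ) → (Fin n → ℂ)) (ζ : Fin n → ℂ) (i j : Fin n) : ℂ :=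
  fderivWithin ℝ Φ (closedPolydisc n) ζ (Pi.single j 1) i

/-- The rank condition (†): for every nonempty `I ⊆ {1,…,n}` of cardinality `q` and
every `ζ ∈ 𝕋ⁿ` with `Φ_I(ζ) ∈ 𝕋^q`, the Jacobian `d_ζΦ_I` has rank `q`. -/
def rankCond (n : ℕ) (Φ : (Fin n → ℂ) → (Fin n → ℂ)) : Prop :=
  ∀ I : Finset (Fin n), I.Nonempty → ∀ ζ ∈ torus n, (∀ i ∈ I, ‖Φ ζ i‖ = 1) →
    Matrix.rank (Matrix.of fun (i : I) (j : Fin n) => jacEntry n Φ ζ i j) = I.card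

/-- The square of the Hardy space norm, `sup_{0<r<1} ∫_{𝕋ⁿ} |g(rξ)|² dσ(ξ)`. -/
def hardySq (n : ℕ) (g : (Fin n → ℂ) → ℂ) : ℝ≥0∞ :=
  ⨆ r ∈ Set.Ioo (0:ℝ) 1,
    ∫⁻ θ in Set.univ.pi (fun _ : Fin n => Set.Icc (0:ℝ) 1),
      ENNReal.ofReal
        (‖g (fun j => (r : ℂ) * Complex.exp (2 * Real.pi * Complex.I * (θ j : ℂ)))‖ ^ 2)

/-- The composition operator `C_Φ` is bounded on the Hardy space `H²(𝔻ⁿ)`. -/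
def bddHardy (n : ℕ) (Φ : (Fin n → ℂ) → (Fin n → ℂ)) : Prop :=
  ∃ C > (0:ℝ), ∀ f : (Fin n → ℂ) → ℂ, DifferentiableOn ℂ f (polydisc n) →
    hardySq n (fun z => f (Φ z)) ≤ ENNReal.ofReal C * hardySq n f

/-!
At a point of the torus where `|Φ_i| = 1`, the function `|Φ_i|` is maximal, so the logarithmic
derivatives `z_j ∂_j Φ_i / Φ_i` are real there: they are the derivatives of the angle of `Φ_i` with
respect to the angles of `z`. Hence the complex rank condition makes the angles of those `Φ_i` with
`|Φ_i| = 1` independent over `ℝ`. Completed by linear forms, they are coordinates with Jacobian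
bounded below near the point, uniformly in the radius, while the other `Φ_i` stay away from the
circle.

Each `Φ_i` then lies in a nontangential approach region at the boundary point given by the `i`-th
new angle, so `|f ∘ Φ|` is dominated by a maximal function of the boundary values of `f`, iterated
over the coordinates, in the new angles. This maximal function is bounded on `L²`: for a measurable
choice of scales `k`, the operator `T` with kernel `p_k(x)(x, y)` satisfies `T T* ≤ D (T + T*)`
pointwise with an absolute constant `D`. A change of variables bounds `f ∘ Φ` in `L²` near the
point, and compactness of `[0, 1] × [0, 1]ⁿ` in polar coordinates gives the result.
-/

section KernelOperators

variable {X : Type*} [MeasurableSpace X] {μ : Measure X} {k : X → X → ℝ≥0∞} {g h : X → ℝ≥0∞}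
  {D : ℝ≥0∞}

theorem sq_lintegral_mul_le (hg : Measurable g) (hh : Measurable h) :
    (∫⁻ x, g x * h x ∂μ) ^ 2 ≤ (∫⁻ x, g x ^ 2 ∂μ) * ∫⁻ x, h x ^ 2 ∂μ := by
  have holder := ENNReal.lintegral_mul_le_Lp_mul_Lq μ Real.HolderConjugate.two_two
    hg.aemeasurable hh.aemeasurable
  refine (pow_le_pow_left₀ zero_le holder 2).trans_eq ?_
  simp [mul_pow, ← ENNReal.rpow_mul_natCast]

/-- The integral operator with kernel `k`, acting on nonnegative functions; its adjoint has the
kernel `flip k`. -/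
def kernelOp (μ : Measure X) (k : X → X → ℝ≥0∞) (g : X → ℝ≥0∞) (x : X) : ℝ≥0∞ :=
  ∫⁻ y, k x y * g y ∂μ

theorem measurable_kernelOp [SFinite μ] (hk : Measurable (Function.uncurry k))
    (hg : Measurable g) : Measurable (kernelOp μ k g) :=
  Measurable.lintegral_prod_right' (f := fun p : X × X => k p.1 p.2 * g p.2)
    (hk.mul (hg.comp measurable_snd))

theorem lintegral_mul_kernelOp [SFinite μ] (hk : Measurable (Function.uncurry k))
    (hg : Measurable g) (hh : Measurable h) :
    ∫⁻ x, h x * kernelOp μ k g x ∂μ = ∫⁻ y, kernelOp μ (flip k) h y * g y ∂μ := by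
  calc ∫⁻ x, h x * kernelOp μ k g x ∂μ = ∫⁻ x, ∫⁻ y, h x * (k x y * g y) ∂μ ∂μ :=
        lintegral_congr fun x => (lintegral_const_mul _ (hk.of_uncurry_left.mul hg)).symm
    _ = ∫⁻ y, ∫⁻ x, h x * (k x y * g y) ∂μ ∂μ :=
        lintegral_lintegral_swap ((hh.comp measurable_fst).mul
          (hk.mul (hg.comp measurable_snd))).aemeasurable
    _ = ∫⁻ y, ∫⁻ x, k x y * h x * g y ∂μ ∂μ := by
        congr! 4; ring
    _ = ∫⁻ y, kernelOp μ (flip k) h y * g y ∂μ :=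
        lintegral_congr fun y => lintegral_mul_const _ (hk.of_uncurry_right.mul hh)

theorem kernelOp_kernelOp_flip_le [SFinite μ] (hk : Measurable (Function.uncurry k))
    (hkk : ∀ x x', ∫⁻ y, k x y * k x' y ∂μ ≤ D * (k x x' + k x' x)) (hh : Measurable h) (x : X) :
    kernelOp μ k (kernelOp μ (flip k) h) x
      ≤ D * (kernelOp μ k h x + kernelOp μ (flip k) h x) := by
  have hk₁ : Measurable fun x' => k x x' * h x' := hk.of_uncurry_left.mul hh
  have hk₂ : Measurable fun x' => k x' x * h x' := hk.of_uncurry_right.mul hh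
  calc kernelOp μ k (kernelOp μ (flip k) h) x
      = ∫⁻ x', h x' * kernelOp μ k (k x) x' ∂μ := by
        simp_rw [lintegral_mul_kernelOp hk hk.of_uncurry_left hh, mul_comm _ (k x _)]; rfl
    _ ≤ ∫⁻ x', D * (k x x' * h x' + k x' x * h x') ∂μ := by
        refine lintegral_mono fun x' => ?_
        calc h x' * kernelOp μ k (k x) x' ≤ h x' * (D * (k x x' + k x' x)) := by
              gcongr; simpa only [kernelOp, mul_comm] using hkk x x'
          _ = D * (k x x' * h x' + k x' x * h x') := by ring
    _ = D * (kernelOp μ k h x + kernelOp μ (flip k) h x) := by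
        rw [lintegral_const_mul _ (hk₁.fun_add hk₂), lintegral_add_left hk₁]
        rfl

theorem lintegral_sq_kernelOp_flip_le [SFinite μ] (hk : Measurable (Function.uncurry k))
    (hkk : ∀ x x', ∫⁻ y, k x y * k x' y ∂μ ≤ D * (k x x' + k x' x)) (hh : Measurable h) :
    ∫⁻ y, kernelOp μ (flip k) h y ^ 2 ∂μ ≤ 2 * D * ∫⁻ x, h x * kernelOp μ k h x ∂μ := by
  have hk' : Measurable (Function.uncurry (flip k)) := hk.comp measurable_swap
  have hT : Measurable fun x => h x * kernelOp μ k h x := hh.mul (measurable_kernelOp hk hh)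
  have hT' : Measurable fun x => h x * kernelOp μ (flip k) h x :=
    hh.mul (measurable_kernelOp hk' hh)
  have symm : ∫⁻ x, h x * kernelOp μ (flip k) h x ∂μ = ∫⁻ x, h x * kernelOp μ k h x ∂μ := by
    simp_rw [lintegral_mul_kernelOp hk hh hh, mul_comm]
  calc ∫⁻ y, kernelOp μ (flip k) h y ^ 2 ∂μ
      = ∫⁻ x, h x * kernelOp μ k (kernelOp μ (flip k) h) x ∂μ := by
        simp_rw [lintegral_mul_kernelOp hk (measurable_kernelOp hk' hh) hh, sq]
    _ ≤ ∫⁻ x, D * (h x * kernelOp μ k h x + h x * kernelOp μ (flip k) h x) ∂μ := by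
        refine lintegral_mono fun x => ?_
        calc h x * kernelOp μ k (kernelOp μ (flip k) h) x
            ≤ h x * (D * (kernelOp μ k h x + kernelOp μ (flip k) h x)) := by
              gcongr; exact kernelOp_kernelOp_flip_le hk hkk hh x
          _ = D * (h x * kernelOp μ k h x + h x * kernelOp μ (flip k) h x) := by ring
    _ = 2 * D * ∫⁻ x, h x * kernelOp μ k h x ∂μ := by
        rw [lintegral_const_mul _ (hT.fun_add hT'), lintegral_add_left hT, symm]
        ring

/-- The squared norm of the integral operator with kernel `k` on `L²` is at most `A`. -/
def KernelOpBound (μ : Measure X) (k : X → X → ℝ≥0∞) (A : ℝ≥0∞) : Prop :=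
  ∀ g : X → ℝ≥0∞, Measurable g → ∫⁻ x, g x ^ 2 ∂μ ≠ ∞ →
    ∫⁻ x, kernelOp μ k g x ^ 2 ∂μ ≤ A * ∫⁻ x, g x ^ 2 ∂μ

theorem KernelOpBound.bootstrap [SFinite μ] (hk : Measurable (Function.uncurry k))
    (hkk : ∀ x x', ∫⁻ y, k x y * k x' y ∂μ ≤ D * (k x x' + k x' x)) {a : ℝ≥0∞} (ha : a ≠ ∞)
    (hA : KernelOpBound μ k (a ^ 2)) : KernelOpBound μ k (2 * D * a) := by
  intro g hg hg2
  have hTg : Measurable (kernelOp μ k g) := measurable_kernelOp hk hg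
  set N := ∫⁻ x, kernelOp μ k g x ^ 2 ∂μ
  have hN : N ≠ ∞ := ne_top_of_le_ne_top (by finiteness) (hA g hg hg2)
  have inner_le : ∫⁻ x, kernelOp μ k g x * kernelOp μ k (kernelOp μ k g) x ∂μ ≤ a * N := by
    refine (ENNReal.pow_le_pow_left_iff two_ne_zero).1 ?_
    calc _ ≤ N * ∫⁻ x, kernelOp μ k (kernelOp μ k g) x ^ 2 ∂μ :=
          sq_lintegral_mul_le hTg (measurable_kernelOp hk hTg)
      _ ≤ N * (a ^ 2 * N) := by gcongr; exact hA _ hTg hN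
      _ = (a * N) ^ 2 := by ring
  have key : N * N ≤ N * (2 * D * a * ∫⁻ x, g x ^ 2 ∂μ) := by
    calc N * N = (∫⁻ x, kernelOp μ (flip k) (kernelOp μ k g) x * g x ∂μ) ^ 2 := by
          rw [← lintegral_mul_kernelOp hk hg hTg, ← sq]; simp only [N, sq]
      _ ≤ (∫⁻ x, kernelOp μ (flip k) (kernelOp μ k g) x ^ 2 ∂μ) * ∫⁻ x, g x ^ 2 ∂μ :=
          sq_lintegral_mul_le (measurable_kernelOp (hk.comp measurable_swap) hTg) hg
      _ ≤ (2 * D * (a * N)) * ∫⁻ x, g x ^ 2 ∂μ := by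
          gcongr
          exact (lintegral_sq_kernelOp_flip_le hk hkk hTg).trans (by gcongr)
      _ = N * (2 * D * a * ∫⁻ x, g x ^ 2 ∂μ) := by ring
  rcases eq_or_ne N 0 with hN0 | hN0
  · exact hN0 ▸ zero_le
  · exact (ENNReal.mul_le_mul_iff_right hN0 hN).1 key

theorem kernelOpBound_of_le {b : ℝ≥0∞} (hkb : ∀ x y, k x y ≤ b) :
    KernelOpBound μ k ((b * μ univ) ^ 2) := by
  intro g hg _
  have pointwise (x : X) : kernelOp μ k g x ^ 2 ≤ b ^ 2 * (μ univ * ∫⁻ y, g y ^ 2 ∂μ) := by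
    calc kernelOp μ k g x ^ 2 ≤ (∫⁻ y, b * (1 * g y) ∂μ) ^ 2 := by
          refine pow_le_pow_left₀ zero_le (lintegral_mono fun y => ?_) 2
          rw [one_mul]; gcongr; exact hkb x y
      _ = b ^ 2 * (∫⁻ y, 1 * g y ∂μ) ^ 2 := by
          rw [lintegral_const_mul _ (measurable_const.fun_mul hg), mul_pow]
      _ ≤ b ^ 2 * (μ univ * ∫⁻ y, g y ^ 2 ∂μ) := by
          gcongr
          simpa using sq_lintegral_mul_le (μ := μ) (measurable_const (a := (1 : ℝ≥0∞))) hg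
  refine (lintegral_mono pointwise).trans_eq ?_
  rw [lintegral_const]; ring

theorem kernelOpBound_sInf {A₀ : ℝ≥0∞} (hA₀ : KernelOpBound μ k A₀) :
    KernelOpBound μ k (sInf {A | KernelOpBound μ k A}) := by
  intro g hg hg2
  rcases eq_or_ne (∫⁻ x, g x ^ 2 ∂μ) 0 with hz | hz
  · simpa [hz] using hA₀ g hg hg2
  · rw [← ENNReal.div_le_iff hz hg2]
    exact le_sInf fun B hB => (ENNReal.div_le_iff hz hg2).2 (hB g hg hg2)

/-- The best constant `a ^ 2` is finite, and the bootstrap step gives `a ^ 2 ≤ 2 * D * a`. -/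
theorem kernelOpBound_of_comp_flip_le [IsFiniteMeasure μ] (hk : Measurable (Function.uncurry k))
    {b : ℝ≥0∞} (hb : b ≠ ∞) (hkb : ∀ x y, k x y ≤ b)
    (hkk : ∀ x x', ∫⁻ y, k x y * k x' y ∂μ ≤ D * (k x x' + k x' x)) :
    KernelOpBound μ k ((2 * D) ^ 2) := by
  have hbound := kernelOpBound_of_le (μ := μ) hkb
  set A := sInf {A | KernelOpBound μ k A}
  obtain ⟨a, haA⟩ : ∃ a : ℝ≥0∞, a ^ 2 = A :=
    ⟨A ^ (1 / 2 : ℝ), by simp [← ENNReal.rpow_mul_natCast]⟩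
  have ha : a ≠ ∞ := by
    have : A ≠ ∞ := ne_top_of_le_ne_top (by finiteness) (sInf_le hbound)
    rintro rfl
    simp [← haA] at this
  have hbest : KernelOpBound μ k (a ^ 2) := haA ▸ kernelOpBound_sInf hbound
  have hself : a * a ≤ a * (2 * D) := by
    calc a * a = A := by rw [← haA, sq]
      _ ≤ 2 * D * a := sInf_le (hbest.bootstrap hk hkk ha)
      _ = a * (2 * D) := mul_comm _ _
  have ha2 : a ≤ 2 * D := by
    rcases eq_or_ne a 0 with ha0 | ha0
    · exact ha0 ▸ zero_le
    · exact (ENNReal.mul_le_mul_iff_right ha0 ha).1 hself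
  exact fun g hg hg2 => (hbest g hg hg2).trans (by gcongr)

end KernelOperators

section MaximalKernels

variable {X : Type*} [MeasurableSpace X] {μ : Measure X}

theorem exists_measurable_argmax {u : ℕ → X → ℝ≥0∞} (hu : ∀ k, Measurable (u k)) (N : ℕ) :
    ∃ δ : X → ℕ, Measurable δ ∧ ∀ x, δ x ≤ N ∧ ∀ j ≤ N, u j x ≤ u (δ x) x := by
  classical
  let p (x : X) (k : ℕ) : Prop := k ≤ N ∧ ∀ j ≤ N, u j x ≤ u k x
  have hp (x : X) : ∃ k, p x k := by
    obtain ⟨k, hk, hmax⟩ := (Finset.range (N + 1)).exists_max_image (u · x) ⟨0, by simp⟩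
    exact ⟨k, by grind, fun j hj => hmax j (by grind)⟩
  refine ⟨fun x => Nat.find (hp x), measurable_find hp fun k => ?_, fun x => Nat.find_spec (hp x)⟩
  have : {x | p x k} = {_x | k ≤ N} ∩ ⋂ j ≤ N, {x | u j x ≤ u k x} := by ext x; simp [p]
  rw [this]
  exact (MeasurableSet.const _).inter
    (.iInter fun j => .iInter fun _ => measurableSet_le (hu j) (hu k))

theorem lintegral_sq_iSup_kernelOp_le [IsFiniteMeasure μ] {p : ℕ → X → X → ℝ≥0∞}
    (hp : ∀ k, Measurable (Function.uncurry (p k))) {b : ℕ → ℝ≥0∞} (hb : ∀ k, b k ≠ ∞)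
    (hpb : ∀ k x y, p k x y ≤ b k) {D : ℝ≥0∞} (hD : D ≠ 0)
    (hpp : ∀ k l x z, ∫⁻ y, p k x y * p l z y ∂μ ≤ D * (p k x z + p l z x))
    {g : X → ℝ≥0∞} (hg : Measurable g) :
    ∫⁻ x, (⨆ k, kernelOp μ (p k) g x) ^ 2 ∂μ ≤ (2 * D) ^ 2 * ∫⁻ x, g x ^ 2 ∂μ := by
  rcases eq_or_ne (∫⁻ x, g x ^ 2 ∂μ) ∞ with hg2 | hg2
  · rw [hg2, ENNReal.mul_top (by simpa using hD)]
    exact le_top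
  have hT (k : ℕ) : Measurable (kernelOp μ (p k) g) := measurable_kernelOp (hp k) hg
  have hsup (x : X) : (⨆ k, kernelOp μ (p k) g x) ^ 2
      = ⨆ N, (⨆ k ≤ N, kernelOp μ (p k) g x) ^ 2 := by
    rw [← ENNReal.iSup_pow, biSup_le_eq_iSup]
  simp_rw [hsup]
  rw [lintegral_iSup (fun N => (Measurable.iSup fun k => .iSup fun _ => hT k).pow_const 2)
    fun N M hNM x => pow_le_pow_left₀ zero_le (biSup_mono fun k hk => hk.trans hNM) 2]
  refine iSup_le fun N => ?_
  obtain ⟨δ, hδ, hδmax⟩ := exists_measurable_argmax hT N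
  calc ∫⁻ x, (⨆ k ≤ N, kernelOp μ (p k) g x) ^ 2 ∂μ
      ≤ ∫⁻ x, kernelOp μ (fun x => p (δ x) x) g x ^ 2 ∂μ :=
        lintegral_mono fun x => pow_le_pow_left₀ zero_le (iSup₂_le (hδmax x).2) 2
    _ ≤ (2 * D) ^ 2 * ∫⁻ x, g x ^ 2 ∂μ := by
        refine kernelOpBound_of_comp_flip_le (k := fun x => p (δ x) x)
          (b := ∑ k ∈ Finset.range (N + 1), b k) ?_
          (ENNReal.sum_ne_top.2 fun k _ => hb k) (fun x y => (hpb _ x y).trans ?_)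
          (fun x z => hpp _ _ x z) g hg hg2
        · exact (measurable_from_prod_countable_right
            (f := fun q : ℕ × (X × X) => p q.1 q.2.1 q.2.2) hp).comp
              ((hδ.comp measurable_fst).prodMk measurable_id)
        · exact Finset.single_le_sum (fun _ _ => zero_le) (by grind)

end MaximalKernels

section CauchyKernel

variable {X : Type*} [PseudoMetricSpace X] {s t : ℝ}

/-- The kernel `t / (t² + dist x y²)`. It is comparable to the Poisson kernel at distance `t` from
the boundary of the disc, and its metric form yields a product inequality. -/
def cauchyKernel (t : ℝ) (x y : X) : ℝ := t / (t ^ 2 + dist x y ^ 2)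

theorem cauchyKernel_nonneg (ht : 0 ≤ t) (x y : X) : 0 ≤ cauchyKernel t x y := by
  unfold cauchyKernel; positivity

theorem cauchyKernel_le_inv (ht : 0 < t) (x y : X) : cauchyKernel t x y ≤ t⁻¹ := by
  unfold cauchyKernel
  rw [inv_eq_one_div, div_le_div_iff₀ (by positivity) ht]
  nlinarith [sq_nonneg (dist x y)]

theorem continuous_cauchyKernel (ht : 0 < t) :
    Continuous fun p : X × X => cauchyKernel t p.1 p.2 :=
  continuous_const.div (by fun_prop) fun p => by positivity

theorem cauchyKernel_le_four_mul (ht : 0 < t) {x y x' y' : X} (h : dist x' y' ≤ 2 * dist x y) :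
    cauchyKernel t x y ≤ 4 * cauchyKernel t x' y' := by
  unfold cauchyKernel
  rw [← mul_div_assoc, div_le_div_iff₀ (by positivity) (by positivity)]
  have : t ^ 2 + dist x' y' ^ 2 ≤ 4 * (t ^ 2 + dist x y ^ 2) := by
    nlinarith [sq_nonneg t, dist_nonneg (x := x') (y := y')]
  nlinarith

/-- One of `x`, `z` lies at distance at least `dist x z / 2` from `y`. -/
theorem cauchyKernel_mul_le (hs : 0 < s) (ht : 0 < t) (x y z : X) :
    cauchyKernel s x y * cauchyKernel t z y ≤
      4 * (cauchyKernel s x z * cauchyKernel t z y + cauchyKernel t z x * cauchyKernel s x y) := by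
  have triangle := dist_triangle_right x z y
  have hxy := cauchyKernel_nonneg hs.le x y
  have hzy := cauchyKernel_nonneg ht.le z y
  have hxz := cauchyKernel_nonneg hs.le x z
  have hzx := cauchyKernel_nonneg ht.le z x
  rcases le_total (dist x y) (dist z y) with h | h
  · have : cauchyKernel t z y ≤ 4 * cauchyKernel t z x :=
      cauchyKernel_le_four_mul ht (by rw [dist_comm z x]; linarith)
    nlinarith [mul_nonneg hxz hzy]
  · have : cauchyKernel s x y ≤ 4 * cauchyKernel s x z :=
      cauchyKernel_le_four_mul hs (by linarith)
    nlinarith [mul_nonneg hzx hxy]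

end CauchyKernel

section PoissonKernel

variable {s t c C : ℝ} {w y ξ : ℂ}

theorem poissonKernel_zero_of_norm_eq_one (hy : ‖y‖ = 1) :
    poissonKernel 0 w y = (1 - ‖w‖ ^ 2) / ‖y - w‖ ^ 2 := by
  simp [poissonKernel_def, hy]

theorem poissonKernel_zero_nonneg (hw : ‖w‖ < 1) (hy : ‖y‖ = 1) : 0 ≤ poissonKernel 0 w y := by
  rw [poissonKernel_zero_of_norm_eq_one hy]
  have : ‖w‖ ^ 2 ≤ 1 := pow_le_one₀ (norm_nonneg _) hw.le
  exact div_nonneg (by linarith) (by positivity)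

theorem norm_smul_of_norm_eq_one (hs : 0 ≤ s) (hξ : ‖ξ‖ = 1) : ‖s • ξ‖ = s := by
  rw [norm_smul, hξ, mul_one, Real.norm_of_nonneg hs]

theorem one_sub_le_norm_sub_smul (hs : 0 ≤ s) (hξ : ‖ξ‖ = 1) (hy : ‖y‖ = 1) :
    1 - s ≤ ‖y - s • ξ‖ := by
  have := norm_sub_norm_le y (s • ξ)
  rwa [hy, norm_smul_of_norm_eq_one hs hξ] at this

theorem abs_norm_sub_smul_sub_dist_le (hs : s ≤ 1) (hξ : ‖ξ‖ = 1) :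
    |‖y - s • ξ‖ - dist ξ y| ≤ 1 - s := by
  have h := abs_norm_sub_norm_le (y - s • ξ) (y - ξ)
  have hdiff : y - s • ξ - (y - ξ) = (1 - s) • ξ := by module
  rwa [hdiff, norm_smul_of_norm_eq_one (sub_nonneg.2 hs) hξ, ← dist_eq_norm y ξ,
    dist_comm y ξ] at h

theorem cauchyKernel_le_poissonKernel (ht : 0 < t) (ht1 : t ≤ 1) (hξ : ‖ξ‖ = 1) (hy : ‖y‖ = 1) :
    cauchyKernel t ξ y ≤ 2 * poissonKernel 0 ((1 - t) • ξ) y := by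
  have hs : 0 ≤ 1 - t := by linarith
  have lower := one_sub_le_norm_sub_smul hs hξ hy
  have close := (abs_le.1 (abs_norm_sub_smul_sub_dist_le (y := y) (by linarith : 1 - t ≤ 1) hξ)).2
  rw [poissonKernel_zero_of_norm_eq_one hy, norm_smul_of_norm_eq_one hs hξ, cauchyKernel]
  set b := ‖y - (1 - t) • ξ‖
  have hb : 0 < b := by linarith
  have hb2 : b ^ 2 ≤ 2 * (t ^ 2 + dist ξ y ^ 2) := by
    nlinarith [sq_nonneg (t - dist ξ y), dist_nonneg (x := ξ) (y := y)]
  rw [← mul_div_assoc, div_le_div_iff₀ (by positivity) (by positivity)]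
  calc t * b ^ 2 ≤ t * (2 * (t ^ 2 + dist ξ y ^ 2)) := by gcongr
    _ = 2 * t * (t ^ 2 + dist ξ y ^ 2) := by ring
    _ ≤ 2 * (1 - (1 - t) ^ 2) * (t ^ 2 + dist ξ y ^ 2) := by gcongr; nlinarith

/-- The Poisson kernel of `w` is at most `C` times a dyadic Cauchy kernel centred at the boundary
point `ξ`. This takes the place of `w` lying in a nontangential approach region at `ξ`. -/
def IsApproach (C : ℝ) (ξ w : ℂ) : Prop :=
  ‖w‖ < 1 ∧ ∃ k : ℕ, ∀ y : ℂ, ‖y‖ = 1 →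
    poissonKernel 0 w y ≤ C * cauchyKernel ((1 / 2) ^ k) ξ y

theorem IsApproach.mono {C' : ℝ} (h : IsApproach C ξ w) (hC : C ≤ C') : IsApproach C' ξ w := by
  obtain ⟨hw, k, hk⟩ := h
  exact ⟨hw, k, fun y hy => (hk y hy).trans
    (mul_le_mul_of_nonneg_right hC (cauchyKernel_nonneg (by positivity) _ _))⟩

theorem isApproach_smul (hs : 0 ≤ s) (hs1 : s < 1) (hξ : ‖ξ‖ = 1) : IsApproach 40 ξ (s • ξ) := by
  refine ⟨by rwa [norm_smul_of_norm_eq_one hs hξ], ?_⟩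
  obtain ⟨k, hk, hk'⟩ := exists_nat_pow_near_of_lt_one (x := 1 - s) (y := (1 / 2 : ℝ))
    (by linarith) (by linarith) (by norm_num) (by norm_num)
  refine ⟨k, fun y hy => ?_⟩
  have lower := one_sub_le_norm_sub_smul hs hξ hy
  have close := (abs_le.1 (abs_norm_sub_smul_sub_dist_le (y := y) hs1.le hξ)).1
  rw [poissonKernel_zero_of_norm_eq_one hy, norm_smul_of_norm_eq_one hs hξ, cauchyKernel]
  rw [pow_succ] at hk
  set T := (1 / 2 : ℝ) ^ k
  set b := ‖y - s • ξ‖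
  have : 0 < T := by positivity
  have hb : 0 < b := by linarith
  have hden : T ^ 2 + dist ξ y ^ 2 ≤ 8 * b ^ 2 := by
    have : T ≤ 2 * b := by linarith
    have : dist ξ y ≤ 2 * b := by linarith
    nlinarith [dist_nonneg (x := ξ) (y := y)]
  have hnum : 1 - s ^ 2 ≤ 2 * T := by nlinarith
  have hnum0 : 0 ≤ 1 - s ^ 2 := by nlinarith
  rw [← mul_div_assoc, div_le_div_iff₀ (by positivity) (by positivity)]
  nlinarith [mul_le_mul hnum hden (by positivity) (by positivity)]

theorem isApproach_of_norm_le (hc : 0 < c) (hw : ‖w‖ ≤ 1 - c) (hξ : ‖ξ‖ = 1) :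
    IsApproach (5 / c ^ 2) ξ w := by
  refine ⟨by linarith, 0, fun y hy => ?_⟩
  have hyw : c ≤ ‖y - w‖ := by
    have := norm_sub_norm_le y w
    linarith
  have hdist : dist ξ y ≤ 2 := by
    have := norm_sub_le ξ y
    rw [dist_eq_norm]; linarith
  have hker : 1 ≤ 5 * cauchyKernel 1 ξ y := by
    rw [cauchyKernel, ← mul_div_assoc, le_div_iff₀ (by positivity)]
    nlinarith [dist_nonneg (x := ξ) (y := y)]
  rw [poissonKernel_zero_of_norm_eq_one hy, pow_zero]
  calc (1 - ‖w‖ ^ 2) / ‖y - w‖ ^ 2 ≤ 1 / c ^ 2 := by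
        gcongr
        nlinarith [sq_nonneg ‖w‖]
    _ ≤ 1 / c ^ 2 * (5 * cauchyKernel 1 ξ y) := le_mul_of_one_le_right (by positivity) hker
    _ = 5 / c ^ 2 * cauchyKernel 1 ξ y := by ring

end PoissonKernel

section Circle

variable {w : ℂ}

/-- The standard embedding `x ↦ exp (2πix)` of `ℝ/ℤ` onto the unit circle of `ℂ`. -/
def circlePt (x : UnitAddCircle) : ℂ := AddCircle.toCircle x

@[simp]
theorem norm_circlePt (x : UnitAddCircle) : ‖circlePt x‖ = 1 := Circle.norm_coe _

@[fun_prop]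
theorem continuous_circlePt : Continuous circlePt :=
  continuous_subtype_val.comp AddCircle.continuous_toCircle

theorem circlePt_coe (x : ℝ) : circlePt x = Complex.exp (2 * Real.pi * Complex.I * x) := by
  rw [circlePt, AddCircle.toCircle_apply_mk, Circle.coe_exp]
  congr 1; push_cast; ring

theorem continuous_poissonKernel_circlePt (hw : ‖w‖ < 1) :
    Continuous fun x => poissonKernel 0 w (circlePt x) := by
  simp_rw [poissonKernel_zero_of_norm_eq_one (norm_circlePt _)]
  refine continuous_const.div (by fun_prop) fun x hx => ?_
  have : circlePt x = w := sub_eq_zero.1 (by simpa using hx)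
  exact hw.ne (this ▸ norm_circlePt x)

theorem integral_poissonKernel_smul_eq {H : ℂ → ℂ} (hH : DiffContOnCl ℂ H (ball 0 1))
    (hw : ‖w‖ < 1) :
    ∫ x : UnitAddCircle, poissonKernel 0 w (circlePt x) • H (circlePt x) = H w := by
  rw [← hH.circleAverage_poissonKernel_smul (w := w) (by simpa using hw), Real.circleAverage_def,
    ← UnitAddCircle.intervalIntegral_preimage 0]
  have rescale := intervalIntegral.integral_comp_mul_left (a := 0) (b := 1)
    (fun θ : ℝ => (poissonKernel 0 w • H) (circleMap 0 1 θ)) (c := 2 * Real.pi) (by positivity)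
  rw [mul_zero, mul_one] at rescale
  rw [← rescale, zero_add]
  refine intervalIntegral.integral_congr fun θ _ => ?_
  have : circleMap 0 1 (2 * Real.pi * θ) = circlePt θ := by
    rw [circlePt_coe, circleMap, Complex.ofReal_one, one_mul, zero_add]
    congr 1; push_cast; ring
  simp only [Pi.smul_apply', this]

theorem enorm_le_lintegral_poissonKernel_mul {H : ℂ → ℂ} (hH : DiffContOnCl ℂ H (ball 0 1))
    (hw : ‖w‖ < 1) :
    ‖H w‖ₑ ≤ ∫⁻ x : UnitAddCircle,
      ENNReal.ofReal (poissonKernel 0 w (circlePt x)) * ‖H (circlePt x)‖ₑ := by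
  rw [← integral_poissonKernel_smul_eq hH hw]
  refine (enorm_integral_le_lintegral_enorm _).trans_eq (lintegral_congr fun x => ?_)
  rw [enorm_smul, Real.enorm_of_nonneg (poissonKernel_zero_nonneg hw (norm_circlePt x))]

theorem lintegral_poissonKernel_eq_one (hw : ‖w‖ < 1) :
    ∫⁻ x : UnitAddCircle, ENNReal.ofReal (poissonKernel 0 w (circlePt x)) = 1 := by
  have hint : Integrable fun x : UnitAddCircle => poissonKernel 0 w (circlePt x) :=
    (continuous_poissonKernel_circlePt hw).integrable_of_hasCompactSupport
      (HasCompactSupport.of_compactSpace _)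
  have hone : ∫ x : UnitAddCircle, poissonKernel 0 w (circlePt x) = 1 := by
    have := integral_poissonKernel_smul_eq (H := fun _ => 1) diffContOnCl_const hw
    simp only [Complex.real_smul, mul_one, integral_complex_ofReal] at this
    exact_mod_cast this
  rw [← ofReal_integral_eq_lintegral_ofReal hint
    (.of_forall fun x => poissonKernel_zero_nonneg hw (norm_circlePt x)), hone, ofReal_one]

/-- The Cauchy kernel at scale `2⁻ᵏ` on the circle. -/
def dyadicKernel (k : ℕ) (x y : UnitAddCircle) : ℝ≥0∞ :=
  ENNReal.ofReal (cauchyKernel ((1 / 2) ^ k) (circlePt x) (circlePt y))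

theorem measurable_dyadicKernel (k : ℕ) : Measurable (Function.uncurry (dyadicKernel k)) := by
  have h : Continuous fun p : ℂ × ℂ => cauchyKernel ((1 / 2) ^ k) p.1 p.2 :=
    continuous_cauchyKernel (by positivity)
  exact (h.comp (f := fun p : UnitAddCircle × UnitAddCircle => (circlePt p.1, circlePt p.2))
    (by fun_prop)).measurable.ennreal_ofReal

theorem dyadicKernel_le (k : ℕ) (x y : UnitAddCircle) :
    dyadicKernel k x y ≤ ENNReal.ofReal ((1 / 2) ^ k)⁻¹ :=
  ENNReal.ofReal_le_ofReal (cauchyKernel_le_inv (by positivity) _ _)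

theorem lintegral_dyadicKernel_le (k : ℕ) (x : UnitAddCircle) : ∫⁻ y, dyadicKernel k x y ≤ 2 := by
  have ht : (0 : ℝ) < (1 / 2) ^ k := by positivity
  have ht1 : (1 / 2 : ℝ) ^ k ≤ 1 := pow_le_one₀ (by norm_num) (by norm_num)
  set w := (1 - (1 / 2) ^ k : ℝ) • circlePt x
  have hw : ‖w‖ < 1 := by
    rw [norm_smul_of_norm_eq_one (by linarith) (norm_circlePt x)]; linarith
  calc ∫⁻ y, dyadicKernel k x y
      ≤ ∫⁻ y, 2 * ENNReal.ofReal (poissonKernel 0 w (circlePt y)) := by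
        refine lintegral_mono fun y => ?_
        rw [← ofReal_ofNat 2, ← ENNReal.ofReal_mul zero_le_two]
        exact ENNReal.ofReal_le_ofReal
          (cauchyKernel_le_poissonKernel ht ht1 (norm_circlePt x) (norm_circlePt y))
    _ = 2 := by
        rw [lintegral_const_mul _
          (continuous_poissonKernel_circlePt hw).measurable.ennreal_ofReal,
          lintegral_poissonKernel_eq_one hw, mul_one]

theorem dyadicKernel_mul_le (k l : ℕ) (x y z : UnitAddCircle) :
    dyadicKernel k x y * dyadicKernel l z y ≤
      4 * (dyadicKernel k x z * dyadicKernel l z y + dyadicKernel l z x * dyadicKernel k x y) := by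
  have hnonneg (k : ℕ) (x y : UnitAddCircle) := cauchyKernel_nonneg
    (by positivity : (0 : ℝ) ≤ (1 / 2) ^ k) (circlePt x) (circlePt y)
  have h := ENNReal.ofReal_le_ofReal (cauchyKernel_mul_le (by positivity : (0 : ℝ) < (1 / 2) ^ k)
    (by positivity : (0 : ℝ) < (1 / 2) ^ l) (circlePt x) (circlePt y) (circlePt z))
  rwa [ENNReal.ofReal_mul (hnonneg _ _ _), ENNReal.ofReal_mul zero_le_four, ofReal_ofNat,
    ENNReal.ofReal_add (mul_nonneg (hnonneg _ _ _) (hnonneg _ _ _))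
      (mul_nonneg (hnonneg _ _ _) (hnonneg _ _ _)),
    ENNReal.ofReal_mul (hnonneg _ _ _), ENNReal.ofReal_mul (hnonneg _ _ _)] at h

theorem lintegral_dyadicKernel_mul_le (k l : ℕ) (x z : UnitAddCircle) :
    ∫⁻ y, dyadicKernel k x y * dyadicKernel l z y
      ≤ 8 * (dyadicKernel k x z + dyadicKernel l z x) := by
  have hk : Measurable (dyadicKernel k x) := (measurable_dyadicKernel k).of_uncurry_left
  have hl : Measurable (dyadicKernel l z) := (measurable_dyadicKernel l).of_uncurry_left
  calc ∫⁻ y, dyadicKernel k x y * dyadicKernel l z y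
      ≤ ∫⁻ y, 4 * (dyadicKernel k x z * dyadicKernel l z y
          + dyadicKernel l z x * dyadicKernel k x y) :=
        lintegral_mono fun y => dyadicKernel_mul_le k l x y z
    _ = 4 * (dyadicKernel k x z * (∫⁻ y, dyadicKernel l z y)
          + dyadicKernel l z x * ∫⁻ y, dyadicKernel k x y) := by
        rw [lintegral_const_mul _ ((hl.const_mul _).fun_add (hk.const_mul _)),
          lintegral_add_left (hl.const_mul _), lintegral_const_mul _ hl, lintegral_const_mul _ hk]
    _ ≤ 4 * (dyadicKernel k x z * 2 + dyadicKernel l z x * 2) := by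
        gcongr <;> exact lintegral_dyadicKernel_le _ _
    _ = 8 * (dyadicKernel k x z + dyadicKernel l z x) := by ring

end Circle

section MaximalFunction

variable {ι : Type*} [DecidableEq ι] {g : (ι → UnitAddCircle) → ℝ≥0∞}

/-- The maximal function of the dyadic kernels in the `i`-th coordinate of a torus. -/
def coordMaximal (i : ι) (g : (ι → UnitAddCircle) → ℝ≥0∞) (x : ι → UnitAddCircle) : ℝ≥0∞ :=
  ⨆ k, kernelOp volume (dyadicKernel k) (fun y => g (Function.update x i y)) (x i)

theorem measurable_coordMaximal (i : ι) (hg : Measurable g) : Measurable (coordMaximal i g) := by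
  refine Measurable.iSup fun k => ?_
  have hk : Measurable fun q : (ι → UnitAddCircle) × UnitAddCircle => dyadicKernel k (q.1 i) q.2 :=
    (measurable_dyadicKernel k).comp (g := Function.uncurry (dyadicKernel k))
      (f := fun q : (ι → UnitAddCircle) × UnitAddCircle => (q.1 i, q.2)) (by fun_prop)
  exact Measurable.lintegral_prod_right'
    (f := fun q : (ι → UnitAddCircle) × UnitAddCircle =>
      dyadicKernel k (q.1 i) q.2 * g (Function.update q.1 i q.2))
    (hk.mul (hg.comp measurable_update'))

theorem lintegral_sq_coordMaximal_le [Fintype ι] (i : ι) (hg : Measurable g) :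
    ∫⁻ x, coordMaximal i g x ^ 2 ≤ 256 * ∫⁻ x, g x ^ 2 := by
  rw [← lintegral_const_mul _ (hg.pow_const 2), volume_pi]
  refine lintegral_le_of_lmarginal_le {i} ((measurable_coordMaximal i hg).pow_const 2)
    ((hg.pow_const 2).const_mul _) ?_
  rw [lmarginal_singleton, lmarginal_singleton]
  intro x
  have hslice : Measurable fun y => g (Function.update x i y) := hg.comp (measurable_update x)
  simp only [coordMaximal, Function.update_self, Function.update_idem]
  rw [lintegral_const_mul _ (hslice.pow_const 2)]
  refine (lintegral_sq_iSup_kernelOp_le measurable_dyadicKernel (fun k => ofReal_ne_top)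
    dyadicKernel_le (by norm_num) lintegral_dyadicKernel_mul_le hslice).trans_eq ?_
  norm_num

theorem enorm_le_coordMaximal {i : ι} {x : ι → UnitAddCircle} {C : ℝ} {w : ℂ} {H : ℂ → ℂ}
    {B : ℝ≥0∞} (hw : IsApproach C (circlePt (x i)) w) (hH : DiffContOnCl ℂ H (ball 0 1))
    (hB : B ≠ ∞) (hHg : ∀ y, ‖H (circlePt y)‖ₑ ≤ B * g (Function.update x i y)) :
    ‖H w‖ₑ ≤ ENNReal.ofReal C * B * coordMaximal i g x := by
  obtain ⟨hw1, k, hk⟩ := hw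
  have hpoisson (y : UnitAddCircle) :
      ENNReal.ofReal (poissonKernel 0 w (circlePt y)) ≤
        ENNReal.ofReal C * dyadicKernel k (x i) y := by
    rw [dyadicKernel, ← ENNReal.ofReal_mul' (cauchyKernel_nonneg (by positivity) _ _)]
    exact ENNReal.ofReal_le_ofReal (hk _ (norm_circlePt y))
  calc ‖H w‖ₑ
      ≤ ∫⁻ y, ENNReal.ofReal (poissonKernel 0 w (circlePt y)) * ‖H (circlePt y)‖ₑ :=
        enorm_le_lintegral_poissonKernel_mul hH hw1
    _ ≤ ∫⁻ y, ENNReal.ofReal C * B * (dyadicKernel k (x i) y * g (Function.update x i y)) := by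
        refine lintegral_mono fun y => (mul_le_mul' (hpoisson y) (hHg y)).trans_eq ?_
        ring
    _ = ENNReal.ofReal C * B *
          kernelOp volume (dyadicKernel k) (fun y => g (Function.update x i y)) (x i) :=
        lintegral_const_mul' _ _ (by finiteness)
    _ ≤ ENNReal.ofReal C * B * coordMaximal i g x := by
        gcongr
        exact le_iSup (fun k => kernelOp volume (dyadicKernel k)
          (fun y => g (Function.update x i y)) (x i)) k

end MaximalFunction

section Polydisc

variable {n : ℕ} {F : (Fin n → ℂ) → ℂ}

theorem circlePt_comp_mem_closedPolydisc (x : Fin n → UnitAddCircle) :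
    circlePt ∘ x ∈ closedPolydisc n :=
  fun j => (norm_circlePt (x j)).le

theorem continuous_comp_circlePt (hF : ContinuousOn F (closedPolydisc n)) :
    Continuous fun x : Fin n → UnitAddCircle => F (circlePt ∘ x) :=
  hF.comp_continuous (by unfold Function.comp; fun_prop) circlePt_comp_mem_closedPolydisc

theorem diffContOnCl_update (hF : DifferentiableOn ℂ F (closedPolydisc n)) {z : Fin n → ℂ}
    (hz : z ∈ closedPolydisc n) (i : Fin n) :
    DiffContOnCl ℂ (fun ξ => F (Function.update z i ξ)) (ball 0 1) := by
  refine DifferentiableOn.diffContOnCl ?_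
  rw [closure_ball _ one_ne_zero]
  refine hF.comp (fun ξ _ => (hasFDerivAt_update z ξ).differentiableAt.differentiableWithinAt) ?_
  intro ξ hξ j
  rcases eq_or_ne j i with rfl | hj
  · simpa using hξ
  · simpa [hj] using hz j

theorem exists_maximal_majorant (hF : DifferentiableOn ℂ F (closedPolydisc n))
    (S : Finset (Fin n)) :
    ∃ G : (Fin n → UnitAddCircle) → ℝ≥0∞, Measurable G ∧
      ∫⁻ x, G x ^ 2 ≤ 256 ^ S.card * ∫⁻ x : Fin n → UnitAddCircle, ‖F (circlePt ∘ x)‖ₑ ^ 2 ∧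
      ∀ (C : ℝ) (x : Fin n → UnitAddCircle) (w : Fin n → ℂ),
        (∀ i ∈ S, IsApproach C (circlePt (x i)) (w i)) →
        ‖F (S.piecewise w (circlePt ∘ x))‖ₑ ≤ ENNReal.ofReal C ^ S.card * G x := by
  induction S using Finset.induction_on with
  | empty =>
    exact ⟨fun x => ‖F (circlePt ∘ x)‖ₑ,
      (continuous_comp_circlePt hF.continuousOn).enorm.measurable, by simp, by simp⟩
  | insert i S hi ih =>
    obtain ⟨G, hG, hG2, hdom⟩ := ih
    refine ⟨coordMaximal i G, measurable_coordMaximal i hG, ?_, fun C x w hw => ?_⟩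
    · rw [Finset.card_insert_of_notMem hi, pow_succ', mul_assoc]
      exact (lintegral_sq_coordMaximal_le i hG).trans (by gcongr)
    · have hz : S.piecewise w (circlePt ∘ x) ∈ closedPolydisc n := by
        intro j
        by_cases hj : j ∈ S
        · simpa [hj] using (hw j (Finset.mem_insert_of_mem hj)).1.le
        · simp [hj]
      rw [Finset.piecewise_insert, Finset.card_insert_of_notMem hi, pow_succ']
      refine enorm_le_coordMaximal (hw i (Finset.mem_insert_self i S))
        (diffContOnCl_update hF hz i) (by finiteness) fun y => ?_
      rw [Finset.update_piecewise_of_notMem _ _ _ hi, ← Function.comp_update]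
      refine hdom C _ w fun j hj => ?_
      rw [Function.update_of_ne (ne_of_mem_of_not_mem hj hi)]
      exact hw j (Finset.mem_insert_of_mem hj)

end Polydisc

section Hardy

variable {n : ℕ} {f : (Fin n → ℂ) → ℂ} {ρ : ℝ}

theorem isOpen_polydisc (n : ℕ) : IsOpen (polydisc n) := by
  simp only [polydisc, ofPred_forall]
  exact isOpen_iInter_of_finite fun j => isOpen_lt (by fun_prop) continuous_const

theorem smul_mem_polydisc (hρ : ρ ∈ Ioo (0 : ℝ) 1) {z : Fin n → ℂ} (hz : z ∈ closedPolydisc n) :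
    ρ • z ∈ polydisc n := by
  intro j
  rw [Pi.smul_apply, norm_smul, Real.norm_of_nonneg hρ.1.le]
  exact (mul_le_of_le_one_right hρ.1.le (hz j)).trans_lt hρ.2

theorem polydisc_subset_closedPolydisc : polydisc n ⊆ closedPolydisc n :=
  fun _ hz j => (hz j).le

theorem differentiableOn_comp_smul (hf : DifferentiableOn ℂ f (polydisc n))
    (hρ : ρ ∈ Ioo (0 : ℝ) 1) : DifferentiableOn ℂ (fun z => f (ρ • z)) (closedPolydisc n) :=
  hf.comp (differentiableOn_id.const_smul ρ) fun _ hz => smul_mem_polydisc hρ hz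

/-- The point of `ℂⁿ` whose coordinates have modulus `r` and arguments `2πθ`. -/
def polarPt (r : ℝ) (θ : Fin n → ℝ) : Fin n → ℂ := r • (circlePt ∘ (fun j => (θ j : UnitAddCircle)))

theorem polarPt_apply (r : ℝ) (θ : Fin n → ℝ) (j : Fin n) :
    polarPt r θ j = r * Complex.exp (2 * Real.pi * Complex.I * θ j) := by
  simp [polarPt, circlePt_coe]

theorem hardySq_eq (g : (Fin n → ℂ) → ℂ) :
    hardySq n g = ⨆ r ∈ Ioo (0 : ℝ) 1,
      ∫⁻ θ in univ.pi fun _ : Fin n => Icc (0 : ℝ) 1, ‖g (polarPt r θ)‖ₑ ^ 2 := by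
  have (r : ℝ) (θ : Fin n → ℝ) : (fun j => (r : ℂ) *
      Complex.exp (2 * Real.pi * Complex.I * (θ j : ℂ))) = polarPt r θ :=
    funext fun j => (polarPt_apply r θ j).symm
  simp only [hardySq, this, ENNReal.ofReal_pow (norm_nonneg _), ofReal_norm]

theorem polarPt_mem_polydisc {r : ℝ} (hr : r ∈ Ioo (0 : ℝ) 1) (θ : Fin n → ℝ) :
    polarPt r θ ∈ polydisc n :=
  smul_mem_polydisc hr (circlePt_comp_mem_closedPolydisc _)

theorem setLIntegral_pi_Ioc_coe (c : Fin n → ℝ) {G : (Fin n → UnitAddCircle) → ℝ≥0∞}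
    (hG : Measurable G) :
    ∫⁻ θ in univ.pi fun i => Ioc (c i) (c i + 1), G (fun i => (θ i : UnitAddCircle))
      = ∫⁻ x, G x := by
  have h := measurePreserving_pi (fun i => (volume : Measure ℝ).restrict (Ioc (c i) (c i + 1)))
    (fun _ => (volume : Measure UnitAddCircle)) fun i => UnitAddCircle.measurePreserving_mk (c i)
  rw [volume_pi, volume_pi, Measure.restrict_pi_pi]
  exact h.lintegral_comp hG

theorem lintegral_comp_smul_circlePt_le_hardySq (hf : DifferentiableOn ℂ f (polydisc n))
    (hρ : ρ ∈ Ioo (0 : ℝ) 1) :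
    ∫⁻ x : Fin n → UnitAddCircle, ‖f (ρ • (circlePt ∘ x))‖ₑ ^ 2 ≤ hardySq n f := by
  have hcont : Continuous fun x : Fin n → UnitAddCircle => f (ρ • (circlePt ∘ x)) :=
    continuous_comp_circlePt (differentiableOn_comp_smul hf hρ).continuousOn
  rw [← setLIntegral_pi_Ioc_coe 0 (hcont.enorm.measurable.pow_const 2), hardySq_eq]
  refine le_iSup₂_of_le ρ hρ (lintegral_mono_set (pi_mono fun i _ => ?_))
  rw [Pi.zero_apply, zero_add]
  exact Ioc_subset_Icc_self

theorem exists_hardy_majorant (hf : DifferentiableOn ℂ f (polydisc n)) (hρ : ρ ∈ Ioo (0 : ℝ) 1) :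
    ∃ G : (Fin n → UnitAddCircle) → ℝ≥0∞, Measurable G ∧
      ∫⁻ x, G x ^ 2 ≤ 256 ^ n * hardySq n f ∧
      ∀ (C : ℝ) (x : Fin n → UnitAddCircle) (w : Fin n → ℂ),
        (∀ i, IsApproach C (circlePt (x i)) (w i)) → ‖f (ρ • w)‖ₑ ≤ ENNReal.ofReal C ^ n * G x := by
  obtain ⟨G, hG, hG2, hdom⟩ :=
    exists_maximal_majorant (differentiableOn_comp_smul hf hρ) Finset.univ
  simp only [Finset.card_univ, Fintype.card_fin, Finset.mem_univ, forall_const,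
    Finset.piecewise_univ] at hG2 hdom
  exact ⟨G, hG, hG2.trans (by gcongr; exact lintegral_comp_smul_circlePt_le_hardySq hf hρ), hdom⟩

theorem tendsto_enorm_comp_smul (hf : DifferentiableOn ℂ f (polydisc n)) {z : Fin n → ℂ}
    (hz : z ∈ polydisc n) {ρ : ℕ → ℝ} (hρ : Filter.Tendsto ρ Filter.atTop (nhds 1)) :
    Filter.Tendsto (fun m => ‖f (ρ m • z)‖ₑ ^ 2) Filter.atTop (nhds (‖f z‖ₑ ^ 2)) := by
  have hfz : ContinuousAt f z :=
    hf.continuousOn.continuousAt ((isOpen_polydisc n).mem_nhds hz)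
  have hρz : Filter.Tendsto (fun m => ρ m • z) Filter.atTop (nhds z) := by
    simpa using hρ.smul_const z
  exact ((ENNReal.continuous_pow 2).tendsto _).comp (hfz.tendsto.comp hρz).enorm

theorem setLIntegral_enorm_sq_le_of_comp_smul {α : Type*} [TopologicalSpace α] [MeasurableSpace α]
    [OpensMeasurableSpace α] {μ : Measure α} {s : Set α} (hs : MeasurableSet s)
    {Ψ : α → Fin n → ℂ} (hΨ : ContinuousOn Ψ s) (hΨs : MapsTo Ψ s (polydisc n))
    (hf : DifferentiableOn ℂ f (polydisc n)) {M : ℝ≥0∞}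
    (hM : ∀ ρ ∈ Ioo (0 : ℝ) 1, ∫⁻ a in s, ‖f (ρ • Ψ a)‖ₑ ^ 2 ∂μ ≤ M) :
    ∫⁻ a in s, ‖f (Ψ a)‖ₑ ^ 2 ∂μ ≤ M := by
  obtain ⟨ρ, -, hρ, hρ1⟩ := exists_seq_strictMono_tendsto' (zero_lt_one (α := ℝ))
  have hmeas (m : ℕ) : AEMeasurable (fun a => ‖f (ρ m • Ψ a)‖ₑ ^ 2) (μ.restrict s) := by
    have hcont : ContinuousOn (fun a => f (ρ m • Ψ a)) s :=
      (differentiableOn_comp_smul hf (hρ m)).continuousOn.comp hΨ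
        fun a ha => polydisc_subset_closedPolydisc (hΨs ha)
    exact ((hcont.aemeasurable hs).enorm).pow_const 2
  calc ∫⁻ a in s, ‖f (Ψ a)‖ₑ ^ 2 ∂μ
      = ∫⁻ a in s, Filter.liminf (fun m => ‖f (ρ m • Ψ a)‖ₑ ^ 2) Filter.atTop ∂μ :=
        setLIntegral_congr_fun hs fun a ha =>
          (tendsto_enorm_comp_smul hf (hΨs ha) hρ1).liminf_eq.symm
    _ ≤ Filter.liminf (fun m => ∫⁻ a in s, ‖f (ρ m • Ψ a)‖ₑ ^ 2 ∂μ) Filter.atTop :=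
        lintegral_liminf_le' hmeas
    _ ≤ M := Filter.liminf_le_of_le (by isBoundedDefault) fun b hb => by
        obtain ⟨m, hm⟩ := hb.exists
        exact hm.trans (hM _ (hρ m))

/-- The Carleson embedding of the Hardy space into `L²(s)` along `Ψ`, with squared norm at most
`K`. -/
def IsCarlesonOn {α : Type*} [MeasureSpace α] (Ψ : α → Fin n → ℂ) (s : Set α) (K : ℝ≥0∞) : Prop :=
  ∀ f : (Fin n → ℂ) → ℂ, DifferentiableOn ℂ f (polydisc n) →
    ∫⁻ a in s, ‖f (Ψ a)‖ₑ ^ 2 ≤ K * hardySq n f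

section Carleson

variable {α : Type*} [MeasureSpace α] {Ψ : α → Fin n → ℂ} {s t : Set α} {K L : ℝ≥0∞}

theorem IsCarlesonOn.mono_set (h : IsCarlesonOn Ψ t K) (hst : s ⊆ t) : IsCarlesonOn Ψ s K :=
  fun f hf => (lintegral_mono_set hst).trans (h f hf)

theorem IsCarlesonOn.union (hs : IsCarlesonOn Ψ s K) (ht : IsCarlesonOn Ψ t L) :
    IsCarlesonOn Ψ (s ∪ t) (K + L) := fun f hf => by
  rw [add_mul]
  exact (lintegral_union_le _ s t).trans (add_le_add (hs f hf) (ht f hf))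

theorem isCarlesonOn_empty : IsCarlesonOn Ψ ∅ 0 := fun f _ => by simp

end Carleson

/-- An injective change of angles `Θ` on `s`, with Jacobian bounded below by `d`, under which every
coordinate of `Ψ θ` approaches the boundary point of angle `Θ θ`. The boxes prevent the angles from
wrapping around the circle. -/
structure IsAngleChart (Ψ : (Fin n → ℝ) → Fin n → ℂ) (s : Set (Fin n → ℝ)) (C d : ℝ)
    (Θ : (Fin n → ℝ) → Fin n → ℝ) (Θ' : (Fin n → ℝ) → (Fin n → ℝ) →L[ℝ] Fin n → ℝ)
    (c : Fin n → ℝ) : Prop where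
  hasFDerivAt : ∀ θ ∈ s, HasFDerivAt Θ (Θ' θ) θ
  injOn : InjOn Θ s
  le_abs_det : ∀ θ ∈ s, d ≤ |(Θ' θ).det|
  mem_Ioc : ∀ θ ∈ s, ∀ i, Θ θ i ∈ Ioc (c i) (c i + 1)
  isApproach : ∀ θ ∈ s, ∀ i, IsApproach C (circlePt (Θ θ i)) (Ψ θ i)

section AngleChart

variable {Ψ : (Fin n → ℝ) → Fin n → ℂ} {s : Set (Fin n → ℝ)} {C d : ℝ}
  {Θ : (Fin n → ℝ) → Fin n → ℝ} {Θ' : (Fin n → ℝ) → (Fin n → ℝ) →L[ℝ] Fin n → ℝ} {c : Fin n → ℝ}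

theorem IsAngleChart.setLIntegral_le (h : IsAngleChart Ψ s C d Θ Θ' c) (hs : MeasurableSet s)
    (hd : 0 < d) {G : (Fin n → UnitAddCircle) → ℝ≥0∞} (hG : Measurable G) :
    ∫⁻ θ in s, G (fun i => (Θ θ i : UnitAddCircle)) ≤ (ENNReal.ofReal d)⁻¹ * ∫⁻ x, G x := by
  have hd0 : ENNReal.ofReal d ≠ 0 := by simpa using hd
  set g : (Fin n → ℝ) → ℝ≥0∞ := fun u => G fun i => (u i : UnitAddCircle)
  calc ∫⁻ θ in s, g (Θ θ)
      ≤ ∫⁻ θ in s, (ENNReal.ofReal d)⁻¹ * (ENNReal.ofReal |(Θ' θ).det| * g (Θ θ)) := by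
        refine setLIntegral_mono' hs fun θ hθ => ?_
        rw [← mul_assoc, ← ENNReal.div_eq_inv_mul]
        exact le_mul_of_one_le_left zero_le ((ENNReal.le_div_iff_mul_le (.inl hd0)
          (.inl ofReal_ne_top)).2 (by simpa using ENNReal.ofReal_le_ofReal (h.le_abs_det θ hθ)))
    _ = (ENNReal.ofReal d)⁻¹ * ∫⁻ u in Θ '' s, g u := by
        rw [lintegral_const_mul' _ _ (ENNReal.inv_ne_top.2 hd0),
          lintegral_image_eq_lintegral_abs_det_fderiv_mul volume hs
            (fun θ hθ => (h.hasFDerivAt θ hθ).hasFDerivWithinAt) h.injOn]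
    _ ≤ (ENNReal.ofReal d)⁻¹ * ∫⁻ u in univ.pi fun i => Ioc (c i) (c i + 1), g u := by
        gcongr
        exact image_subset_iff.2 fun θ hθ i _ => h.mem_Ioc θ hθ i
    _ = (ENNReal.ofReal d)⁻¹ * ∫⁻ x, G x := by rw [setLIntegral_pi_Ioc_coe c hG]

theorem IsAngleChart.isCarlesonOn (h : IsAngleChart Ψ s C d Θ Θ' c) (hs : MeasurableSet s)
    (hd : 0 < d) (hΨ : ContinuousOn Ψ s) :
    IsCarlesonOn Ψ s ((ENNReal.ofReal C ^ n) ^ 2 * ((ENNReal.ofReal d)⁻¹ * 256 ^ n)) := by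
  intro f hf
  have hΨs : MapsTo Ψ s (polydisc n) := fun θ hθ i => (h.isApproach θ hθ i).1
  refine setLIntegral_enorm_sq_le_of_comp_smul hs hΨ hΨs hf fun ρ hρ => ?_
  obtain ⟨G, hG, hG2, hdom⟩ := exists_hardy_majorant hf hρ
  calc ∫⁻ θ in s, ‖f (ρ • Ψ θ)‖ₑ ^ 2
      ≤ ∫⁻ θ in s, (ENNReal.ofReal C ^ n) ^ 2 * G (fun i => (Θ θ i : UnitAddCircle)) ^ 2 := by
        refine setLIntegral_mono' hs fun θ hθ => ?_
        rw [← mul_pow]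
        gcongr
        exact hdom C _ _ (h.isApproach θ hθ)
    _ = (ENNReal.ofReal C ^ n) ^ 2 * ∫⁻ θ in s, G (fun i => (Θ θ i : UnitAddCircle)) ^ 2 :=
        lintegral_const_mul' _ _ (by finiteness)
    _ ≤ (ENNReal.ofReal C ^ n) ^ 2 * ((ENNReal.ofReal d)⁻¹ * (256 ^ n * hardySq n f)) := by
        gcongr
        exact (h.setLIntegral_le hs hd (hG.pow_const 2)).trans (by gcongr)
    _ = _ := by ring

end AngleChart

variable {Φ : (Fin n → ℂ) → Fin n → ℂ}

theorem bddHardy_of_isCarlesonOn {K : ℝ≥0∞} (hK : K ≠ ∞)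
    (h : ∀ r ∈ Ioo (0 : ℝ) 1, IsCarlesonOn (fun θ : Fin n → ℝ => Φ (polarPt r θ))
      (univ.pi fun _ => Icc 0 1) K) : bddHardy n Φ := by
  refine ⟨K.toReal + 1, by positivity, fun f hf => ?_⟩
  rw [hardySq_eq]
  refine iSup₂_le fun r hr => (h r hr f hf).trans ?_
  gcongr
  rw [ENNReal.le_ofReal_iff_toReal_le hK (by positivity)]
  linarith

theorem bddHardy_of_locally_isCarlesonOn
    (h : ∀ r₀ ∈ Icc (0 : ℝ) 1, ∀ θ₀ : Fin n → ℝ, ∃ K ≠ ∞, ∃ U ∈ nhds (r₀, θ₀),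
      ∀ r ∈ Ioo (0 : ℝ) 1, IsCarlesonOn (fun θ => Φ (polarPt r θ)) {θ | (r, θ) ∈ U} K) :
    bddHardy n Φ := by
  let p (s : Set (ℝ × (Fin n → ℝ))) : Prop := ∃ K ≠ ∞,
    ∀ r ∈ Ioo (0 : ℝ) 1, IsCarlesonOn (fun θ => Φ (polarPt r θ)) {θ | (r, θ) ∈ s} K
  have hcompact : IsCompact (Icc (0 : ℝ) 1 ×ˢ univ.pi fun _ : Fin n => Icc (0 : ℝ) 1) :=
    isCompact_Icc.prod (isCompact_univ_pi fun _ => isCompact_Icc)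
  obtain ⟨K, hK, hcube⟩ : p (Icc (0 : ℝ) 1 ×ˢ univ.pi fun _ : Fin n => Icc (0 : ℝ) 1) := by
    refine hcompact.induction_on ⟨0, zero_ne_top, fun r _ => isCarlesonOn_empty⟩ ?_ ?_ ?_
    · rintro s t hst ⟨K, hK, ht⟩
      exact ⟨K, hK, fun r hr => (ht r hr).mono_set fun θ hθ => hst hθ⟩
    · rintro s t ⟨K, hK, hs⟩ ⟨L, hL, ht⟩
      exact ⟨K + L, by finiteness, fun r hr => (hs r hr).union (ht r hr)⟩
    · rintro ⟨r₀, θ₀⟩ ⟨hr₀, -⟩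
      obtain ⟨K, hK, U, hU, hUK⟩ := h r₀ hr₀ θ₀
      exact ⟨U, mem_nhdsWithin_of_mem_nhds hU, K, hK, hUK⟩
  exact bddHardy_of_isCarlesonOn hK fun r hr =>
    (hcube r hr).mono_set fun θ hθ => ⟨Ioo_subset_Icc_self hr, hθ⟩

end Hardy

section LinearAlgebra

theorem exists_linearIndependent_eqOn {K V ι : Type*} [Field K] [AddCommGroup V] [Module K V]
    [Module.Finite K V] [Fintype ι] (hV : Module.finrank K V = Fintype.card ι) {m : ι → V}
    {I : Set ι} (hm : LinearIndepOn K m I) : ∃ b : ι → V, EqOn b m I ∧ LinearIndependent K b := by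
  classical
  obtain ⟨Q, hQ⟩ := (Submodule.span K (m '' I)).exists_isCompl
  have hspan : Module.finrank K (Submodule.span K (m '' I)) = Fintype.card I := by
    rw [image_eq_range]
    exact finrank_span_eq_card hm
  have hQcard : Module.finrank K Q = Fintype.card ↥Iᶜ := by
    have h := Submodule.finrank_add_eq_of_isCompl hQ
    rw [Fintype.card_compl_set]
    omega
  let e : Module.Basis ↥Iᶜ K Q := (Module.finBasisOfFinrankEq K Q hQcard).reindex
    (Fintype.equivFin _).symm
  let b : ι → V := fun i => if h : i ∈ Iᶜ then e ⟨i, h⟩ else m i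
  have hbI : EqOn b m I := fun i hi => dif_neg (not_not_intro hi)
  have hbIc : (fun i : ↥Iᶜ => b i) = fun i => (e i : V) := funext fun i => dif_pos i.2
  have hindep : LinearIndepOn K b Iᶜ := by
    rw [LinearIndepOn, hbIc]
    exact e.linearIndependent.map' Q.subtype Q.ker_subtype
  refine ⟨b, hbI, ?_⟩
  rw [← linearIndepOn_univ_iff, ← union_compl_self I]
  refine ((linearIndepOn_congr hbI).2 hm).union hindep ?_
  rw [hbI.image_eq]
  refine hQ.disjoint.mono_right (Submodule.span_le.2 ?_)
  rintro _ ⟨i, hi, rfl⟩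
  rw [congrFun hbIc ⟨i, hi⟩]
  exact (e ⟨i, hi⟩).2

theorem exists_nhds_injOn_of_hasFDerivAt {E F : Type*} [NormedAddCommGroup E] [NormedSpace ℝ E]
    [NormedAddCommGroup F] [NormedSpace ℝ F] (B : E ≃L[ℝ] F) :
    ∃ U ∈ nhds (B : E →L[ℝ] F), ∀ (s : Set E) (f : E → F) (f' : E → E →L[ℝ] F), Convex ℝ s →
      (∀ x ∈ s, HasFDerivAt f (f' x) x) → (∀ x ∈ s, f' x ∈ U) → InjOn f s := by
  rcases subsingleton_or_nontrivial E with hE | hE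
  · exact ⟨univ, Filter.univ_mem, fun _ f _ _ _ _ => (Function.injective_of_subsingleton f).injOn⟩
  have hN : 0 < ‖(B.symm : F →L[ℝ] E)‖₊ := B.nnnorm_symm_pos
  set c := ‖(B.symm : F →L[ℝ] E)‖₊⁻¹ / 2
  have hc : 0 < c := by positivity
  refine ⟨closedBall (B : E →L[ℝ] F) c, closedBall_mem_nhds _ hc, fun s f f' hs hf hU => ?_⟩
  have happrox : ApproximatesLinearOn f (B : E →L[ℝ] F) s c :=
    fun x hx y hy => hs.norm_image_sub_le_of_norm_hasFDerivWithin_le'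
      (fun z hz => (hf z hz).hasFDerivWithinAt) (fun z hz => mem_closedBall_iff_norm.1 (hU z hz))
      hy hx
  exact happrox.injOn (Or.inr (NNReal.half_lt_self (by positivity)))

/-- The continuous linear map `v ↦ M *ᵥ v`. -/
def mulVecCLM {m n : ℕ} : Matrix (Fin m) (Fin n) ℝ →ₗ[ℝ] (Fin n → ℝ) →L[ℝ] (Fin m → ℝ) :=
  (LinearMap.toContinuousLinearMap.toLinearMap).comp Matrix.toLin'.toLinearMap

theorem mulVecCLM_apply {m n : ℕ} (M : Matrix (Fin m) (Fin n) ℝ) (v : Fin n → ℝ) :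
    mulVecCLM M v = M.mulVec v := rfl

theorem det_mulVecCLM {n : ℕ} (M : Matrix (Fin n) (Fin n) ℝ) : (mulVecCLM M).det = M.det :=
  LinearMap.det_toLin' M

theorem exists_nhds_injOn_of_det_ne_zero {n : ℕ} {M₀ : Matrix (Fin n) (Fin n) ℝ}
    (hM₀ : M₀.det ≠ 0) :
    ∃ U ∈ nhds M₀, ∀ (s : Set (Fin n → ℝ)) (f : (Fin n → ℝ) → Fin n → ℝ)
      (M : (Fin n → ℝ) → Matrix (Fin n) (Fin n) ℝ), Convex ℝ s →
      (∀ x ∈ s, HasFDerivAt f (mulVecCLM (M x)) x) → (∀ x ∈ s, M x ∈ U) → InjOn f s := by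
  let B := (mulVecCLM M₀).toContinuousLinearEquivOfDetNeZero (by rwa [det_mulVecCLM])
  obtain ⟨U, hU, hinj⟩ := exists_nhds_injOn_of_hasFDerivAt B
  exact ⟨mulVecCLM ⁻¹' U,
    (LinearMap.continuous_of_finiteDimensional mulVecCLM).continuousAt.preimage_mem_nhds hU,
    fun s f M hs hf hMU => hinj s f _ hs hf hMU⟩

end LinearAlgebra

section Angle

variable {a w : ℂ}

/-- The angle of `w` in turns, on the branch continuous near `w = a`. -/
def angleNear (a w : ℂ) : ℝ := (a.arg + (w / a).arg) / (2 * Real.pi)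

theorem norm_smul_circlePt_angleNear (ha : ‖a‖ = 1) (w : ℂ) :
    ‖w‖ • circlePt (angleNear a w : ℝ) = w := by
  have ha0 : a ≠ 0 := norm_ne_zero_iff.1 (by simp [ha])
  have hexp : 2 * (Real.pi : ℂ) * Complex.I * (angleNear a w : ℝ) =
      a.arg * Complex.I + (w / a).arg * Complex.I := by
    simp only [angleNear]
    push_cast
    field
  calc ‖w‖ • circlePt (angleNear a w : ℝ)
      = (‖a‖ * Complex.exp (a.arg * Complex.I)) *
          (‖w / a‖ * Complex.exp ((w / a).arg * Complex.I)) := by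
        rw [circlePt_coe, hexp, Complex.exp_add, norm_div, ha, Complex.real_smul]
        push_cast
        ring
    _ = a * (w / a) := by simp only [Complex.norm_mul_exp_arg_mul_I]
    _ = w := mul_div_cancel₀ w ha0

theorem isApproach_angleNear (ha : ‖a‖ = 1) (hw : ‖w‖ < 1) :
    IsApproach 40 (circlePt (angleNear a w : ℝ)) w := by
  simpa only [norm_smul_circlePt_angleNear ha] using
    isApproach_smul (norm_nonneg w) hw (norm_circlePt (angleNear a w : ℝ))

theorem angleNear_mem_Ioc (a w : ℂ) :
    angleNear a w ∈
      Ioc (a.arg / (2 * Real.pi) - 1 / 2) (a.arg / (2 * Real.pi) - 1 / 2 + 1) := by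
  have hlo := Complex.neg_pi_lt_arg (w / a)
  have hhi := Complex.arg_le_pi (w / a)
  have hsplit : angleNear a w = a.arg / (2 * Real.pi) + (w / a).arg / (2 * Real.pi) := add_div ..
  have hlo' : -(1 / 2) < (w / a).arg / (2 * Real.pi) := by
    rw [lt_div_iff₀ (by positivity)]; linarith
  have hhi' : (w / a).arg / (2 * Real.pi) ≤ 1 / 2 := by
    rw [div_le_iff₀ (by positivity)]; linarith
  constructor <;> linarith

theorem hasFDerivAt_angleNear {E : Type*} [NormedAddCommGroup E] [NormedSpace ℝ E] {f : E → ℂ}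
    {f' : E →L[ℝ] ℂ} {x : E} (hf : HasFDerivAt f f' x) (hx : f x / a ∈ Complex.slitPlane) :
    HasFDerivAt (fun y => angleNear a (f y))
      ((2 * Real.pi)⁻¹ • Complex.imCLM.comp ((f x)⁻¹ • f')) x := by
  have hquot : f x / a ≠ 0 := Complex.slitPlane_ne_zero hx
  obtain ⟨hfx, ha⟩ : f x ≠ 0 ∧ a ≠ 0 := by simpa [not_or] using hquot
  have hdiv : HasFDerivAt (fun y => f y / a) (a⁻¹ • f') x := by
    simpa only [div_eq_mul_inv] using hf.mul_const a⁻¹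
  have hlog : HasFDerivAt (fun y => Complex.log (f y / a)) ((f x)⁻¹ • f') x := by
    refine (((Complex.hasDerivAt_log hx).hasFDerivAt.restrictScalars ℝ).comp x hdiv).congr_fderiv ?_
    ext v
    simp [field]
  have him := ((Complex.imCLM.hasFDerivAt.comp x hlog).const_add a.arg).const_mul (2 * Real.pi)⁻¹
  refine him.congr_of_eventuallyEq (.of_forall fun y => ?_)
  simp [angleNear, Complex.log_im, div_eq_inv_mul]

end Angle

section LogJacobian

variable {n : ℕ} {Φ : (Fin n → ℂ) → Fin n → ℂ} {r : ℝ} {θ : Fin n → ℝ}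

theorem closedPolydisc_eq_closedBall (n : ℕ) : closedPolydisc n = closedBall 0 1 := by
  ext z
  exact (pi_norm_le_iff_of_nonneg zero_le_one).symm.trans mem_closedBall_zero_iff.symm

theorem closure_polydisc (n : ℕ) : closure (polydisc n) = closedPolydisc n := by
  have hball : polydisc n = ball 0 1 := by
    ext z
    exact (pi_norm_lt_iff one_pos).symm.trans mem_ball_zero_iff.symm
  rw [hball, closedPolydisc_eq_closedBall, closure_ball _ one_ne_zero]

theorem uniqueDiffOn_closedPolydisc (n : ℕ) : UniqueDiffOn ℝ (closedPolydisc n) := by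
  rw [closedPolydisc_eq_closedBall]
  exact uniqueDiffOn_convex (convex_closedBall 0 1)
    ⟨0, mem_interior_iff_mem_nhds.2 (closedBall_mem_nhds 0 one_pos)⟩

theorem mapsTo_closedPolydisc (hΦ : ContinuousOn Φ (closedPolydisc n))
    (hmap : MapsTo Φ (polydisc n) (polydisc n)) :
    MapsTo Φ (closedPolydisc n) (closedPolydisc n) := by
  rw [← closure_polydisc] at hΦ ⊢
  exact hmap.closure_of_continuousOn hΦ

theorem continuousOn_jacEntry (hsm : ContDiffOn ℝ 1 Φ (closedPolydisc n)) (i j : Fin n) :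
    ContinuousOn (fun z => jacEntry n Φ z i j) (closedPolydisc n) :=
  continuousOn_pi.1 ((hsm.continuousOn_fderivWithin (uniqueDiffOn_closedPolydisc n)
    le_rfl).clm_apply continuousOn_const) i

theorem fderivWithin_closedPolydisc_smul (hhol : DifferentiableOn ℂ Φ (polydisc n))
    (hsm : ContDiffOn ℝ 1 Φ (closedPolydisc n)) {z : Fin n → ℂ} (hz : z ∈ closedPolydisc n)
    (c : ℂ) (v : Fin n → ℂ) :
    fderivWithin ℝ Φ (closedPolydisc n) z (c • v) =
      c • fderivWithin ℝ Φ (closedPolydisc n) z v := by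
  have hcont (v : Fin n → ℂ) :
      ContinuousOn (fun z => fderivWithin ℝ Φ (closedPolydisc n) z v) (closedPolydisc n) :=
    (hsm.continuousOn_fderivWithin (uniqueDiffOn_closedPolydisc n) le_rfl).clm_apply
      continuousOn_const
  have hinterior : EqOn (fun z => fderivWithin ℝ Φ (closedPolydisc n) z (c • v))
      (fun z => c • fderivWithin ℝ Φ (closedPolydisc n) z v) (polydisc n) := fun z hz => by
    have hnhds := (isOpen_polydisc n).mem_nhds hz
    have hreal : HasFDerivAt Φ ((fderiv ℂ Φ z).restrictScalars ℝ) z :=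
      ((hhol z hz).differentiableAt hnhds).hasFDerivAt.restrictScalars ℝ
    have heq : fderivWithin ℝ Φ (closedPolydisc n) z = (fderiv ℂ Φ z).restrictScalars ℝ := by
      rw [fderivWithin_of_mem_nhds (Filter.mem_of_superset hnhds polydisc_subset_closedPolydisc),
        hreal.fderiv]
    simp only [heq, ContinuousLinearMap.coe_restrictScalars', map_smul]
  exact hinterior.of_subset_closure (hcont _) ((hcont _).const_smul c)
    polydisc_subset_closedPolydisc (closure_polydisc n).ge hz

theorem fderivWithin_closedPolydisc_apply (hhol : DifferentiableOn ℂ Φ (polydisc n))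
    (hsm : ContDiffOn ℝ 1 Φ (closedPolydisc n)) {z : Fin n → ℂ} (hz : z ∈ closedPolydisc n)
    (v : Fin n → ℂ) (i : Fin n) :
    fderivWithin ℝ Φ (closedPolydisc n) z v i = ∑ j, v j * jacEntry n Φ z i j := by
  conv_lhs => rw [pi_eq_sum_univ' v]
  simp only [map_sum, fderivWithin_closedPolydisc_smul hhol hsm hz, Finset.sum_apply,
    Pi.smul_apply, smul_eq_mul, jacEntry]

theorem continuous_polarPt : Continuous fun p : ℝ × (Fin n → ℝ) => polarPt p.1 p.2 :=
  continuous_pi fun j => by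
    simp only [polarPt_apply]
    fun_prop

theorem polarPt_mem_closedPolydisc (hr : r ∈ Icc (0 : ℝ) 1) (θ : Fin n → ℝ) :
    polarPt r θ ∈ closedPolydisc n := fun j => by
  simpa [polarPt, abs_of_nonneg hr.1] using hr.2

theorem hasFDerivAt_polarPt (r : ℝ) (θ : Fin n → ℝ) :
    HasFDerivAt (polarPt r) (ContinuousLinearMap.pi fun j =>
      (ContinuousLinearMap.proj (R := ℝ) (φ := fun _ : Fin n => ℝ) j).smulRight
        (2 * Real.pi * Complex.I * polarPt r θ j)) θ := by
  rw [hasFDerivAt_pi']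
  intro j
  have hcoord : HasFDerivAt (fun θ : Fin n → ℝ => (θ j : ℂ)) (Complex.ofRealCLM.comp
      (ContinuousLinearMap.proj (R := ℝ) (φ := fun _ : Fin n => ℝ) j)) θ :=
    (Complex.ofRealCLM.comp (ContinuousLinearMap.proj
      (R := ℝ) (φ := fun _ : Fin n => ℝ) j)).hasFDerivAt
  simp only [polarPt_apply]
  refine ((hcoord.const_mul (2 * Real.pi * Complex.I)).cexp.const_mul (r : ℂ)).congr_fderiv ?_
  ext v
  simp only [_root_.smul_apply, ContinuousLinearMap.comp_apply, ContinuousLinearMap.proj_apply,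
    Complex.ofRealCLM_apply, smul_eq_mul, ContinuousLinearMap.proj_pi,
    ContinuousLinearMap.smulRight_apply, Complex.real_smul]
  ring

/-- The matrix `z_j ∂_j Φ_i / Φ_i` of logarithmic derivatives of `Φ`; its entries are junk in the
rows where `Φ_i` vanishes. -/
def logJac (Φ : (Fin n → ℂ) → Fin n → ℂ) (z : Fin n → ℂ) : Matrix (Fin n) (Fin n) ℂ :=
  Matrix.of fun i j => (Φ z i)⁻¹ * (z j * jacEntry n Φ z i j)

theorem continuousWithinAt_logJac (hsm : ContDiffOn ℝ 1 Φ (closedPolydisc n)) {z : Fin n → ℂ}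
    (hz : z ∈ closedPolydisc n) {i : Fin n} (hi : Φ z i ≠ 0) (j : Fin n) :
    ContinuousWithinAt (fun w => logJac Φ w i j) (closedPolydisc n) z :=
  ((continuousWithinAt_pi.1 (hsm.continuousOn z hz) i).inv₀ hi).mul
    ((continuous_apply j).continuousWithinAt.mul (continuousOn_jacEntry hsm i j z hz))

theorem hasFDerivAt_comp_polarPt (hhol : DifferentiableOn ℂ Φ (polydisc n))
    (hsm : ContDiffOn ℝ 1 Φ (closedPolydisc n)) (hr : r ∈ Icc (0 : ℝ) 1) {i : Fin n}
    (hi : Φ (polarPt r θ) i ≠ 0) :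
    HasFDerivAt (fun θ => Φ (polarPt r θ) i)
      (∑ j, (ContinuousLinearMap.proj (R := ℝ) (φ := fun _ : Fin n => ℝ) j).smulRight
        (2 * Real.pi * Complex.I * (Φ (polarPt r θ) i * logJac Φ (polarPt r θ) i j))) θ := by
  have hz := polarPt_mem_closedPolydisc hr θ
  have hcomp := ((hsm.differentiableOn one_ne_zero _ hz).hasFDerivWithinAt).comp_hasFDerivAt θ
    (hasFDerivAt_polarPt r θ) (.of_forall (polarPt_mem_closedPolydisc hr))
  refine (hasFDerivAt_pi'.1 hcomp i).congr_fderiv (ContinuousLinearMap.ext fun v => ?_)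
  simp only [ContinuousLinearMap.comp_apply, ContinuousLinearMap.proj_apply,
    fderivWithin_closedPolydisc_apply hhol hsm hz, ContinuousLinearMap.pi_apply,
    ContinuousLinearMap.smulRight_apply, _root_.sum_apply, Complex.real_smul, logJac,
    Matrix.of_apply, mul_inv_cancel_left₀ hi]
  exact Finset.sum_congr rfl fun j _ => by ring

theorem inner_two_pi_I_mul_mul (w u : ℂ) :
    inner ℝ w (2 * Real.pi * Complex.I * (w * u)) = -(2 * Real.pi * (‖w‖ ^ 2 * u.im)) := by
  have h : 2 * Real.pi * Complex.I * (w * u) * (starRingEnd ℂ) w =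
      ((2 * Real.pi * ‖w‖ ^ 2 : ℝ) : ℂ) * (Complex.I * u) := by
    push_cast
    rw [← Complex.mul_conj']
    ring
  rw [Complex.inner, h, Complex.re_ofReal_mul, Complex.I_mul_re]
  ring

theorem logJac_im_eq_zero (hhol : DifferentiableOn ℂ Φ (polydisc n))
    (hsm : ContDiffOn ℝ 1 Φ (closedPolydisc n)) (hmap : MapsTo Φ (polydisc n) (polydisc n))
    {i : Fin n} (hi : ‖Φ (polarPt 1 θ) i‖ = 1) (j : Fin n) :
    (logJac Φ (polarPt 1 θ) i j).im = 0 := by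
  have hmem : (1 : ℝ) ∈ Icc (0 : ℝ) 1 := right_mem_Icc.2 zero_le_one
  have hmax : IsLocalMax (fun θ => ‖Φ (polarPt 1 θ) i‖ ^ 2) θ := .of_forall fun η => by
    simp only [hi]
    gcongr
    exact mapsTo_closedPolydisc hsm.continuousOn hmap (polarPt_mem_closedPolydisc hmem η) i
  have hne : Φ (polarPt 1 θ) i ≠ 0 := norm_ne_zero_iff.1 (by rw [hi]; exact one_ne_zero)
  have hderiv := (hasFDerivAt_comp_polarPt hhol hsm hmem hne).norm_sq
  have hcrit := DFunLike.congr_fun (hmax.hasFDerivAt_eq_zero hderiv) (Pi.single j 1)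
  simpa [Pi.single_apply, inner_two_pi_I_mul_mul (Φ (polarPt 1 θ) i), hi] using hcrit

theorem linearIndepOn_re_logJac (hrank : rankCond n Φ) {ζ : Fin n → ℂ} (hζ : ζ ∈ torus n)
    {I : Finset (Fin n)} (hI : ∀ i ∈ I, ‖Φ ζ i‖ = 1) (him : ∀ i ∈ I, ∀ j, (logJac Φ ζ i j).im = 0) :
    LinearIndepOn ℝ (fun i j => (logJac Φ ζ i j).re) (I : Set (Fin n)) := by
  rcases I.eq_empty_or_nonempty with rfl | hne
  · simp
  set J : Matrix I (Fin n) ℂ := Matrix.of fun i j => jacEntry n Φ ζ i j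
  have hrows : LinearIndependent ℂ J.row := by
    rw [linearIndependent_iff_card_eq_finrank_span, Set.finrank, ← Matrix.rank_eq_finrank_span_row,
      hrank I hne ζ hζ hI, Fintype.card_coe]
  rw [LinearIndepOn, Fintype.linearIndependent_iff]
  intro g hg i
  have hcomb : ∑ i : I, ((g i : ℂ) * (Φ ζ i)⁻¹) • J.row i = 0 := by
    ext j
    have hζj : ζ j ≠ 0 := norm_ne_zero_iff.1 (by rw [hζ j]; exact one_ne_zero)
    have hreal (i : I) : ζ j * ((g i : ℂ) * (Φ ζ i)⁻¹ * jacEntry n Φ ζ i j) =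
        ((g i * (logJac Φ ζ i j).re : ℝ) : ℂ) := by
      have hL : ((logJac Φ ζ i j).re : ℂ) = logJac Φ ζ i j :=
        Complex.ext rfl (him i i.2 j).symm
      rw [Complex.ofReal_mul, hL, logJac, Matrix.of_apply]
      ring
    have hgj : ∑ i : I, g i * (logJac Φ ζ i j).re = 0 := by
      have hj := congrFun hg j
      simp only [Finset.sum_apply, Pi.smul_apply, smul_eq_mul, Pi.zero_apply] at hj
      exact hj
    refine mul_left_cancel₀ hζj ?_
    simp only [Finset.sum_apply, Pi.smul_apply, smul_eq_mul, J, Matrix.row_apply, Matrix.of_apply,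
      Finset.mul_sum, hreal, ← Complex.ofReal_sum, hgj, Pi.zero_apply, Complex.ofReal_zero,
      mul_zero]
  have hΦi : Φ ζ i ≠ 0 := norm_ne_zero_iff.1 (by rw [hI i i.2]; exact one_ne_zero)
  simpa [hΦi] using Fintype.linearIndependent_iff.1 hrows _ hcomb i

end LogJacobian

section LocalChart

variable {n : ℕ} {Φ : (Fin n → ℂ) → Fin n → ℂ} {I : Finset (Fin n)} {a : Fin n → ℂ}
  {b : Matrix (Fin n) (Fin n) ℝ} {r : ℝ} {θ : Fin n → ℝ}

/-- The angular coordinates of the proof: for `i ∈ I` the angle of `Φ_i` near `a i`, at the point of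
radius `r` and angles `θ`, completed by the linear forms `b i`, `i ∉ I`. -/
def localAngle (Φ : (Fin n → ℂ) → Fin n → ℂ) (I : Finset (Fin n)) (a : Fin n → ℂ)
    (b : Matrix (Fin n) (Fin n) ℝ) (r : ℝ) (θ : Fin n → ℝ) : Fin n → ℝ :=
  I.piecewise (fun i => angleNear (a i) (Φ (polarPt r θ) i)) (b.mulVec θ)

/-- The Jacobian of `localAngle` in `θ`, as a function of the point `z` of `ℂⁿ`. -/
def localAngleJac (Φ : (Fin n → ℂ) → Fin n → ℂ) (I : Finset (Fin n))
    (b : Matrix (Fin n) (Fin n) ℝ) (z : Fin n → ℂ) : Matrix (Fin n) (Fin n) ℝ :=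
  Matrix.of (I.piecewise (fun i j => (logJac Φ z i j).re) b)

theorem localAngle_of_mem {i : Fin n} (hi : i ∈ I) :
    localAngle Φ I a b r θ i = angleNear (a i) (Φ (polarPt r θ) i) :=
  I.piecewise_eq_of_mem _ _ hi

theorem localAngle_of_notMem {i : Fin n} (hi : i ∉ I) :
    localAngle Φ I a b r θ i = b.mulVec θ i :=
  I.piecewise_eq_of_notMem _ _ hi

theorem localAngleJac_of_mem {i : Fin n} (hi : i ∈ I) (z : Fin n → ℂ) :
    localAngleJac Φ I b z i = fun j => (logJac Φ z i j).re :=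
  I.piecewise_eq_of_mem (fun i j => (logJac Φ z i j).re) b hi

theorem localAngleJac_of_notMem {i : Fin n} (hi : i ∉ I) (z : Fin n → ℂ) :
    localAngleJac Φ I b z i = b i :=
  I.piecewise_eq_of_notMem (fun i j => (logJac Φ z i j).re) b hi

theorem hasFDerivAt_localAngle (hhol : DifferentiableOn ℂ Φ (polydisc n))
    (hsm : ContDiffOn ℝ 1 Φ (closedPolydisc n)) (hr : r ∈ Icc (0 : ℝ) 1)
    (hslit : ∀ i ∈ I, Φ (polarPt r θ) i / a i ∈ Complex.slitPlane) :
    HasFDerivAt (localAngle Φ I a b r) (mulVecCLM (localAngleJac Φ I b (polarPt r θ))) θ := by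
  refine hasFDerivAt_pi'.2 fun i => ?_
  by_cases hi : i ∈ I
  · have hne : Φ (polarPt r θ) i ≠ 0 := fun h => by simpa [h] using hslit i hi
    simp only [localAngle_of_mem hi]
    refine (hasFDerivAt_angleNear (hasFDerivAt_comp_polarPt hhol hsm hr hne)
      (hslit i hi)).congr_fderiv (ContinuousLinearMap.ext fun v => ?_)
    have hterm (j : Fin n) : (2 * Real.pi)⁻¹ * ((Φ (polarPt r θ) i)⁻¹ * (v j * (2 * Real.pi *
        Complex.I * (Φ (polarPt r θ) i * logJac Φ (polarPt r θ) i j)))).im =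
        (logJac Φ (polarPt r θ) i j).re * v j := by
      have hcancel : (Φ (polarPt r θ) i)⁻¹ * (v j * (2 * Real.pi * Complex.I *
          (Φ (polarPt r θ) i * logJac Φ (polarPt r θ) i j))) =
          ((v j * (2 * Real.pi) : ℝ) : ℂ) * (Complex.I * logJac Φ (polarPt r θ) i j) := by
        push_cast
        field
      rw [hcancel, Complex.im_ofReal_mul, Complex.I_mul_im]
      field
    simp only [_root_.smul_apply, ContinuousLinearMap.comp_apply,
      ContinuousLinearMap.proj_apply, ContinuousLinearMap.smulRight_apply, _root_.sum_apply,
      Complex.imCLM_apply, Complex.real_smul, smul_eq_mul, Finset.mul_sum, Complex.im_sum, hterm,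
      mulVecCLM_apply, Matrix.mulVec, dotProduct, localAngleJac_of_mem hi]
  · simp only [localAngle_of_notMem hi]
    refine ((ContinuousLinearMap.proj i).comp (mulVecCLM b)).hasFDerivAt.congr_fderiv
      (ContinuousLinearMap.ext fun v => ?_)
    simp only [ContinuousLinearMap.comp_apply, ContinuousLinearMap.proj_apply, mulVecCLM_apply,
      Matrix.mulVec, localAngleJac_of_notMem hi]

theorem continuousWithinAt_localAngleJac (hsm : ContDiffOn ℝ 1 Φ (closedPolydisc n))
    {z : Fin n → ℂ} (hz : z ∈ closedPolydisc n) (hI : ∀ i ∈ I, Φ z i ≠ 0) :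
    ContinuousWithinAt (localAngleJac Φ I b) (closedPolydisc n) z := by
  refine continuousWithinAt_pi.2 fun i => continuousWithinAt_pi.2 fun j => ?_
  by_cases hi : i ∈ I
  · simp only [localAngleJac_of_mem hi]
    exact Complex.continuous_re.continuousAt.comp_continuousWithinAt
      (continuousWithinAt_logJac hsm hz (hI i hi) j)
  · simp only [localAngleJac_of_notMem hi]
    exact continuousWithinAt_const

theorem linearIndepOn_re_logJac_polarPt (hhol : DifferentiableOn ℂ Φ (polydisc n))
    (hsm : ContDiffOn ℝ 1 Φ (closedPolydisc n)) (hmap : MapsTo Φ (polydisc n) (polydisc n))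
    (hrank : rankCond n Φ) (hr : r ∈ Icc (0 : ℝ) 1) (hI : ∀ i ∈ I, ‖Φ (polarPt r θ) i‖ = 1) :
    LinearIndepOn ℝ (fun i j => (logJac Φ (polarPt r θ) i j).re) (I : Set (Fin n)) := by
  rcases hr.2.lt_or_eq with hr1 | rfl
  · have hz : polarPt r θ ∈ polydisc n := fun j => by
      simpa [polarPt, abs_of_nonneg hr.1] using hr1
    obtain rfl : I = ∅ := Finset.eq_empty_of_forall_notMem fun i hi =>
      (hmap hz i).ne (hI i hi)
    simp
  · exact linearIndepOn_re_logJac hrank (fun j => by simp [polarPt]) hI fun i hi =>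
      logJac_im_eq_zero hhol hsm hmap (hI i hi)

theorem exists_det_localAngleJac_ne_zero {z : Fin n → ℂ}
    (hI : LinearIndepOn ℝ (fun i j => (logJac Φ z i j).re) (I : Set (Fin n))) :
    ∃ b, (localAngleJac Φ I b z).det ≠ 0 := by
  obtain ⟨b, hbI, hb⟩ := exists_linearIndependent_eqOn (by simp) hI
  have hJac : localAngleJac Φ I b z = Matrix.of b := funext fun i => by
    by_cases hi : i ∈ I
    · exact (localAngleJac_of_mem hi z).trans (hbI hi).symm
    · exact localAngleJac_of_notMem hi z
  refine ⟨b, ?_⟩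
  rw [hJac, ← isUnit_iff_ne_zero, ← Matrix.isUnit_iff_isUnit_det,
    ← Matrix.linearIndependent_rows_iff_isUnit]
  exact hb

theorem isAngleChart_localAngle (hhol : DifferentiableOn ℂ Φ (polydisc n))
    (hsm : ContDiffOn ℝ 1 Φ (closedPolydisc n)) (hmap : MapsTo Φ (polydisc n) (polydisc n))
    (hr : r ∈ Ioo (0 : ℝ) 1) {s : Set (Fin n → ℝ)} {c d : ℝ} (hc : 0 < c) {v : Fin n → ℝ}
    (ha : ∀ i ∈ I, ‖a i‖ = 1)
    (hslit : ∀ θ ∈ s, ∀ i ∈ I, Φ (polarPt r θ) i / a i ∈ Complex.slitPlane)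
    (hnorm : ∀ θ ∈ s, ∀ i ∉ I, ‖Φ (polarPt r θ) i‖ ≤ 1 - c)
    (hbox : ∀ θ ∈ s, ∀ i, b.mulVec θ i ∈ Ioc (v i) (v i + 1))
    (hdet : ∀ θ ∈ s, d ≤ |(localAngleJac Φ I b (polarPt r θ)).det|)
    (hinj : InjOn (localAngle Φ I a b r) s) :
    IsAngleChart (fun θ => Φ (polarPt r θ)) s (max 40 (5 / c ^ 2)) d (localAngle Φ I a b r)
      (fun θ => mulVecCLM (localAngleJac Φ I b (polarPt r θ)))
      (I.piecewise (fun i => (a i).arg / (2 * Real.pi) - 1 / 2) v) where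
  hasFDerivAt θ hθ := hasFDerivAt_localAngle hhol hsm (Ioo_subset_Icc_self hr) (hslit θ hθ)
  injOn := hinj
  le_abs_det θ hθ := by simpa only [det_mulVecCLM] using hdet θ hθ
  mem_Ioc θ hθ i := by
    by_cases hi : i ∈ I
    · rw [localAngle_of_mem hi, I.piecewise_eq_of_mem _ _ hi]
      exact angleNear_mem_Ioc (a i) _
    · rw [localAngle_of_notMem hi, I.piecewise_eq_of_notMem _ _ hi]
      exact hbox θ hθ i
  isApproach θ hθ i := by
    by_cases hi : i ∈ I
    · rw [localAngle_of_mem hi]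
      exact (isApproach_angleNear (ha i hi) (hmap (polarPt_mem_polydisc hr θ) i)).mono
        (le_max_left _ _)
    · exact (isApproach_of_norm_le hc (hnorm θ hθ i hi) (norm_circlePt _)).mono (le_max_right _ _)

theorem exists_eventually_norm_le {X : Type*} [TopologicalSpace X] {ι E : Type*} [Finite ι]
    [SeminormedAddCommGroup E] {F : X → ι → E} {s : Set X} {x : X}
    (hF : ContinuousWithinAt F s x) :
    ∃ c > 0, ∀ᶠ y in nhdsWithin x s, ∀ i, ‖F x i‖ < 1 → ‖F y i‖ ≤ 1 - c := by
  have hgap : ∀ᶠ c in nhdsWithin (0 : ℝ) (Ioi 0), ∀ i, ‖F x i‖ < 1 → ‖F x i‖ < 1 - c := by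
    refine Filter.eventually_all.2 fun i => Filter.eventually_imp_distrib_left.2 fun hi => ?_
    have h0 : ContinuousAt (fun c : ℝ => 1 - c) 0 := by fun_prop
    exact (h0.eventually (lt_mem_nhds (by simpa using hi))).filter_mono nhdsWithin_le_nhds
  obtain ⟨c, hcgap, hc⟩ := (hgap.and self_mem_nhdsWithin).exists
  refine ⟨c, hc, Filter.eventually_all.2 fun i =>
    Filter.eventually_imp_distrib_left.2 fun hi => ?_⟩
  exact ((continuousWithinAt_pi.1 hF i).norm.eventually (gt_mem_nhds (hcgap i hi))).mono
    fun _ => le_of_lt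

theorem eventually_div_mem_slitPlane {X ι : Type*} [TopologicalSpace X] {F : X → ι → ℂ} {s : Set X}
    {x : X} (hF : ContinuousWithinAt F s x) {I : Finset ι} (hI : ∀ i ∈ I, F x i ≠ 0) :
    ∀ᶠ y in nhdsWithin x s, ∀ i ∈ I, F y i / F x i ∈ Complex.slitPlane := by
  refine (Filter.eventually_all_finset I).2 fun i hi => ?_
  refine ((continuousWithinAt_pi.1 hF i).div_const _).eventually
    (Complex.isOpen_slitPlane.mem_nhds ?_)
  simpa only [div_self (hI i hi)] using Complex.one_mem_slitPlane

theorem eventually_mulVec_mem_Ioc (b : Matrix (Fin n) (Fin n) ℝ) (θ₀ : Fin n → ℝ) :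
    ∀ᶠ θ in nhds θ₀, ∀ i,
      b.mulVec θ i ∈ Ioc (b.mulVec θ₀ i - 1 / 2) (b.mulVec θ₀ i - 1 / 2 + 1) := by
  refine Filter.eventually_all.2 fun i => ?_
  have hcont : ContinuousAt (fun θ => b.mulVec θ i) θ₀ :=
    ((continuous_apply i).comp (continuous_const.matrix_mulVec continuous_id)).continuousAt
  exact hcont.eventually_mem (Ioc_mem_nhds (by linarith) (by linarith))

theorem exists_eventually_localAngleJac_mem (hsm : ContDiffOn ℝ 1 Φ (closedPolydisc n))
    {z : Fin n → ℂ} (hz : z ∈ closedPolydisc n) (hI : ∀ i ∈ I, Φ z i ≠ 0)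
    (hdet : (localAngleJac Φ I b z).det ≠ 0) {V : Set (Matrix (Fin n) (Fin n) ℝ)}
    (hV : V ∈ nhds (localAngleJac Φ I b z)) :
    ∃ c > 0, ∀ᶠ w in nhdsWithin z (closedPolydisc n),
      (∀ i ∈ I, Φ w i / Φ z i ∈ Complex.slitPlane) ∧ (∀ i, ‖Φ z i‖ < 1 → ‖Φ w i‖ ≤ 1 - c) ∧
      |(localAngleJac Φ I b z).det| / 2 ≤ |(localAngleJac Φ I b w).det| ∧
      localAngleJac Φ I b w ∈ V := by
  obtain ⟨c, hc, hnorm⟩ := exists_eventually_norm_le (hsm.continuousOn z hz)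
  have hJac := continuousWithinAt_localAngleJac (b := b) hsm hz hI
  have hdet' : ∀ᶠ w in nhdsWithin z (closedPolydisc n),
      |(localAngleJac Φ I b z).det| / 2 < |(localAngleJac Φ I b w).det| :=
    (continuous_id.matrix_det.abs.continuousAt.comp_continuousWithinAt hJac).eventually
      (lt_mem_nhds (half_lt_self (abs_pos.2 hdet)))
  exact ⟨c, hc, (eventually_div_mem_slitPlane (hsm.continuousOn z hz) hI).and
    (hnorm.and ((hdet'.mono fun _ => le_of_lt).and (hJac hV)))⟩

theorem tendsto_polarPt (r₀ : ℝ) (θ₀ : Fin n → ℝ) :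
    Filter.Tendsto (fun p : ℝ × (Fin n → ℝ) => polarPt p.1 p.2)
      (nhdsWithin (r₀, θ₀) (Icc 0 1 ×ˢ univ))
      (nhdsWithin (polarPt r₀ θ₀) (closedPolydisc n)) :=
  continuous_polarPt.continuousWithinAt.tendsto_nhdsWithin fun p hp =>
    polarPt_mem_closedPolydisc hp.1 p.2

theorem exists_isAngleChart (hhol : DifferentiableOn ℂ Φ (polydisc n))
    (hsm : ContDiffOn ℝ 1 Φ (closedPolydisc n)) (hmap : MapsTo Φ (polydisc n) (polydisc n))
    (hrank : rankCond n Φ) {r₀ : ℝ} (hr₀ : r₀ ∈ Icc (0 : ℝ) 1) (θ₀ : Fin n → ℝ) :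
    ∃ C d : ℝ, 0 < d ∧ ∃ U ∈ nhds (r₀, θ₀), IsOpen U ∧
      ∀ r ∈ Ioo (0 : ℝ) 1, ∃ Θ Θ' c,
        IsAngleChart (fun θ => Φ (polarPt r θ)) {θ | (r, θ) ∈ U} C d Θ Θ' c := by
  have hz₀ := polarPt_mem_closedPolydisc hr₀ θ₀
  let I : Finset (Fin n) := {i | ‖Φ (polarPt r₀ θ₀) i‖ = 1}
  have hI : ∀ i ∈ I, ‖Φ (polarPt r₀ θ₀) i‖ = 1 := fun i hi => (Finset.mem_filter.1 hi).2
  have hIc : ∀ i ∉ I, ‖Φ (polarPt r₀ θ₀) i‖ < 1 := fun i hi =>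
    (mapsTo_closedPolydisc hsm.continuousOn hmap hz₀ i).lt_of_ne fun h => hi (by simp [I, h])
  have hne : ∀ i ∈ I, Φ (polarPt r₀ θ₀) i ≠ 0 := fun i hi =>
    norm_ne_zero_iff.1 (by rw [hI i hi]; exact one_ne_zero)
  obtain ⟨b, hb⟩ := exists_det_localAngleJac_ne_zero
    (linearIndepOn_re_logJac_polarPt hhol hsm hmap hrank hr₀ hI)
  obtain ⟨V, hV, hinj⟩ := exists_nhds_injOn_of_det_ne_zero hb
  obtain ⟨c, hc, hchart⟩ := exists_eventually_localAngleJac_mem hsm hz₀ hne hb hV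
  have hbox : ∀ᶠ p : ℝ × (Fin n → ℝ) in nhdsWithin (r₀, θ₀) (Icc 0 1 ×ˢ univ), ∀ i,
      b.mulVec p.2 i ∈ Ioc (b.mulVec θ₀ i - 1 / 2) (b.mulVec θ₀ i - 1 / 2 + 1) :=
    ((continuous_snd.tendsto (r₀, θ₀)).mono_left nhdsWithin_le_nhds).eventually
      (eventually_mulVec_mem_Ioc b θ₀)
  obtain ⟨ε, hε, hball⟩ := Metric.mem_nhdsWithin_iff.1
    (((tendsto_polarPt r₀ θ₀).eventually hchart).and hbox)
  refine ⟨max 40 (5 / c ^ 2), _, half_pos (abs_pos.2 hb), ball (r₀, θ₀) ε, ball_mem_nhds _ hε,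
    isOpen_ball, fun r hr => ?_⟩
  have hr' := Ioo_subset_Icc_self hr
  have hslice (θ) (hθ : (r, θ) ∈ ball (r₀, θ₀) ε) := hball ⟨hθ, hr', mem_univ θ⟩
  have hconvex : Convex ℝ {θ | (r, θ) ∈ ball (r₀, θ₀) ε} := fun x hx y hy s t hs ht hst => by
    simpa [← add_mul, hst] using convex_ball (r₀, θ₀) ε hx hy hs ht hst
  exact ⟨_, _, _, isAngleChart_localAngle hhol hsm hmap hr hc hI (fun θ hθ => (hslice θ hθ).1.1)
    (fun θ hθ i hi => (hslice θ hθ).1.2.1 i (hIc i hi)) (fun θ hθ => (hslice θ hθ).2)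
    (fun θ hθ => (hslice θ hθ).1.2.2.1)
    (hinj _ _ _ hconvex
      (fun θ hθ => hasFDerivAt_localAngle hhol hsm hr' (hslice θ hθ).1.1)
      fun θ hθ => (hslice θ hθ).1.2.2.2)⟩

end LocalChart

theorem rank_sufficiency_hardy (n : ℕ) (Φ : (Fin n → ℂ) → (Fin n → ℂ))
    (hhol : DifferentiableOn ℂ Φ (polydisc n))
    (hsm : ContDiffOn ℝ 1 Φ (closedPolydisc n))
    (hmap : ∀ z ∈ polydisc n, Φ z ∈ polydisc n)
    (hrank : rankCond n Φ) :
    bddHardy n Φ := by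
  refine bddHardy_of_locally_isCarlesonOn fun r₀ hr₀ θ₀ => ?_
  obtain ⟨C, d, hd, U, hU, hUopen, hchart⟩ := exists_isAngleChart hhol hsm hmap hrank hr₀ θ₀
  have hd0 : ENNReal.ofReal d ≠ 0 := by simpa using hd
  refine ⟨(ENNReal.ofReal C ^ n) ^ 2 * ((ENNReal.ofReal d)⁻¹ * 256 ^ n), by finiteness, U, hU,
    fun r hr => ?_⟩
  obtain ⟨Θ, Θ', c, hΘ⟩ := hchart r hr
  have hmeas : MeasurableSet {θ | (r, θ) ∈ U} :=
    (hUopen.preimage (Continuous.prodMk_right r)).measurableSet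
  have hcont : ContinuousOn (fun θ => Φ (polarPt r θ)) {θ | (r, θ) ∈ U} :=
    hhol.continuousOn.comp
      (continuous_polarPt.comp (Continuous.prodMk_right r)).continuousOn
      fun θ _ => polarPt_mem_polydisc hr θ
  exact hΘ.isCarlesonOn hmeas hd hcont

end
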